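/- arXiv:math/0311393 — 2 statements merged into one kernel-verified Lean document; each statement's English description precedes it below -/
import Mathlib

section
/- Let k ≥ 1 be a fixed integer, let ε > 0, and let n: ℕ → ℕ be a function with n(d) ≤ 2^d and n(d) ≥ 2^{(τ_k + ε)d} for all d. For each d, choose an n(d)-element subset W of {0,1}^d uniformly at random among all n(d)-element subsets, and set P := conv W ⊆ ℝ^d. Then the expected k-face density E[φ_k(P)] tends to 0 as d → ∞. -/
open Filter
open scoped BigOperators

/-- The binary entropy function `h(ξ) = ξ log₂(1/ξ) + (1-ξ) log₂(1/(1-ξ))`. -/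
noncomputable def binEnt (x : ℝ) : ℝ :=
  x * Real.logb 2 x⁻¹ + (1 - x) * Real.logb 2 (1 - x)⁻¹

/-- `H_r = (1/(2^r-2)) ∑_{i=1}^{r-1} C(r,i) h(i/r)`. -/
noncomputable def Hent (r : ℕ) : ℝ :=
  (1 / ((2 : ℝ) ^ r - 2)) * ∑ i ∈ Finset.Icc 1 (r - 1), (r.choose i : ℝ) * binEnt ((i : ℝ) / r)

/-- `τ̃_r = 1 - (1 - 2^{1-r}) H_r`. -/
noncomputable def tauT (r : ℕ) : ℝ := 1 - (1 - (2 : ℝ) ^ ((1 : ℤ) - (r : ℤ))) * Hent r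

/-- `τ_k = τ̃_{k+1}`. -/
noncomputable def tau (k : ℕ) : ℝ := tauT (k + 1)

/-- The 0/1-point of `ℝ^d` associated to a Boolean vector. -/
def bv {d : ℕ} (x : Fin d → Bool) : Fin d → ℝ := fun i => if x i then 1 else 0

/-- The set of 0/1 vertices of the cube, as a `Finset` of `ℝ^d`. -/
noncomputable def cubeV (d : ℕ) : Finset (Fin d → ℝ) := by
  classical exact Finset.univ.image bv

/-- `F` is a face of `P`: either `P` itself or an exposed face, i.e. the set of
points of `P` maximizing some linear functional `x ↦ ∑ i, a i * x i` over `P`. -/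
def IsFace {d : ℕ} (P F : Set (Fin d → ℝ)) : Prop :=
  F = P ∨ ∃ a : Fin d → ℝ,
    F = {x | x ∈ P ∧ ∀ y ∈ P, ∑ i, a i * y i ≤ ∑ i, a i * x i}

/-- `f_k(P)`: the number of `k`-dimensional faces of `P`. -/
noncomputable def faceCount {d : ℕ} (k : ℕ) (P : Set (Fin d → ℝ)) : ℕ :=
  {F : Set (Fin d → ℝ) | IsFace P F ∧ Module.finrank ℝ (vectorSpan ℝ F) = k}.ncard

/-- The `k`-face density `φ_k(conv W) = f_k(conv W) / C(|W|, k+1)`. -/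
noncomputable def faceDensity {d : ℕ} (k : ℕ) (W : Finset (Fin d → ℝ)) : ℝ :=
  (faceCount k (convexHull ℝ (W : Set (Fin d → ℝ))) : ℝ) / (W.card.choose (k + 1) : ℝ)

/-!
Write `r = k + 1` and `c = 1 - τ_k`, the average entropy of a row of a random Boolean matrix with
`r` columns. Every `k`-face of `conv W` has an affine basis `S ⊆ W` of `r` points whose barycentre
lies outside `conv (W \ aff S)`, so it suffices to bound the expected proportion of such `S`.

View `S` as the columns of a `d × r` Boolean matrix. Choosing in every row an independent random
column gives a cube vertex; by the law of large numbers, for all but a vanishing proportion of the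
`S` this vertex is spread over at least about `2^{cd}` vertices. The cyclic shifts of a choice have
the same barycentre as `S`, so a half-space through that barycentre contains a random vertex with
probability at least `1 / r`, hence contains at least `2^{c'd}` vertices of the cube for every
`c' < c`. A random `W` of size at least `2^{(τ_k + ε)d}` misses a given such half-space with
probability at most about `exp (-2^{(c' + τ_k + ε - 1)d})`, and by the Sauer–Shelah lemma there are
only `e^{O(d²)}` half-spaces to consider.
-/

open Finset

section Chebyshev

variable {ι α : Type*} [Fintype ι] [DecidableEq ι] [Fintype α]

lemma sum_apply_mul_apply_eq_zero {i j : ι} (hij : i ≠ j) {f : α → ℝ} (g : α → ℝ)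
    (hf : ∑ a, f a = 0) : ∑ ω : ι → α, f (ω i) * g (ω j) = 0 := by
  rw [← (Equiv.funSplitAt i α).symm.sum_comp, Fintype.sum_prod_type_right]
  refine sum_eq_zero fun ω _ => ?_
  simp only [Equiv.funSplitAt_symm_apply, dif_neg hij.symm, ↓reduceDIte, ← sum_mul, hf, zero_mul]

lemma sum_sq_sum_apply_le {f : ι → α → ℝ} {M : ℝ} (hf : ∀ i, ∑ a, f i a = 0)
    (hM : ∀ i a, f i a ^ 2 ≤ M) :
    ∑ ω : ι → α, (∑ i, f i (ω i)) ^ 2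
      ≤ (Fintype.card α : ℝ) ^ Fintype.card ι * (Fintype.card ι * M) := by
  calc ∑ ω : ι → α, (∑ i, f i (ω i)) ^ 2
      = ∑ i, ∑ j, ∑ ω : ι → α, f i (ω i) * f j (ω j) := by
        simp_rw [sq, sum_mul_sum]
        rw [sum_comm]
        exact sum_congr rfl fun i _ => sum_comm
    _ = ∑ i, ∑ ω : ι → α, f i (ω i) ^ 2 := by
        refine sum_congr rfl fun i _ => ?_
        rw [sum_eq_single_of_mem i (mem_univ i)
          fun j _ hji => sum_apply_mul_apply_eq_zero hji.symm (f j) (hf i)]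
        simp_rw [sq]
    _ ≤ ∑ _i : ι, ∑ _ω : ι → α, M := by gcongr; exact hM _ _
    _ = (Fintype.card α : ℝ) ^ Fintype.card ι * (Fintype.card ι * M) := by
        simp only [sum_const, card_univ, Fintype.card_fun, nsmul_eq_mul, Nat.cast_pow]
        ring

lemma card_sum_lt_sum_expect_sub_mul_sq_le {f : ι → α → ℝ} {b t : ℝ}
    (hf : ∀ i a, f i a ∈ Set.Icc 0 b) (ht : 0 ≤ t) :
    #{ω : ι → α | ∑ i, f i (ω i) < ∑ i, 𝔼 a, f i a - t} * t ^ 2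
      ≤ (Fintype.card α : ℝ) ^ Fintype.card ι * (Fintype.card ι * b ^ 2) := by
  have hmean : ∀ i (_ : α), 𝔼 a, f i a ∈ Set.Icc 0 b := fun i a =>
    ⟨expect_nonneg fun a _ => (hf i a).1, expect_le ⟨a, mem_univ a⟩ fun a _ => (hf i a).2⟩
  have hcentered : ∀ i, ∑ a, (f i a - 𝔼 a', f i a') = 0 := fun i => by
    rw [sum_sub_distrib, sum_const, card_univ, Fintype.card_smul_expect, sub_self]
  have hbound : ∀ i a, (f i a - 𝔼 a', f i a') ^ 2 ≤ b ^ 2 := fun i a =>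
    sq_le_sq' (by linarith [(hf i a).1, (hmean i a).2]) (by linarith [(hf i a).2, (hmean i a).1])
  refine le_trans ?_ (sum_sq_sum_apply_le hcentered hbound)
  rw [← nsmul_eq_mul]
  refine (card_nsmul_le_sum _ _ _ fun ω hω => ?_).trans
    (sum_le_sum_of_subset_of_nonneg (subset_univ _) fun ω _ _ => sq_nonneg _)
  rw [sum_sub_distrib]
  nlinarith [(mem_filter.1 hω).2]

end Chebyshev

section Entropy

variable {ι κ β : Type*} [Fintype ι] [Fintype κ] [DecidableEq β]

/-- The information content, in bits, of the value `v m` when the index is uniformly random. -/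
noncomputable def surprisal (v : κ → β) (m : κ) : ℝ :=
  Real.logb 2 (Fintype.card κ / #{m' | v m' = v m})

/-- The Shannon entropy, in bits, of the value of `v` at a uniformly random index. -/
noncomputable def empiricalEntropy (v : κ → β) : ℝ := 𝔼 m, surprisal v m

/-- The average over all Boolean vectors of length `r` of their empirical entropy; this is the
quantity `(1 - 2^{1-r}) H_r` of the paper. -/
noncomputable def meanEntropy (r : ℕ) : ℝ := 𝔼 v : Fin r → Bool, empiricalEntropy v

lemma card_fiber_pos (v : κ → β) (m : κ) : 0 < #{m' | v m' = v m} :=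
  card_pos.2 ⟨m, by simp⟩

lemma surprisal_mem_Icc (v : κ → β) (m : κ) :
    surprisal v m ∈ Set.Icc 0 (Fintype.card κ : ℝ) := by
  have hfiber : (1 : ℝ) ≤ #{m' | v m' = v m} := mod_cast card_fiber_pos v m
  have hle : (#{m' | v m' = v m} : ℝ) ≤ Fintype.card κ := mod_cast card_le_univ _
  refine ⟨Real.logb_nonneg one_lt_two ((one_le_div (by linarith)).2 hle), ?_⟩
  rw [surprisal, Real.logb_le_iff_le_rpow one_lt_two (div_pos (by linarith) (by linarith)),
    Real.rpow_natCast]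
  calc (Fintype.card κ : ℝ) / #{m' | v m' = v m} ≤ Fintype.card κ :=
        div_le_self (by positivity) hfiber
    _ ≤ 2 ^ Fintype.card κ := mod_cast Nat.lt_two_pow_self.le

lemma card_forall_apply_eq_apply [DecidableEq ι] (V : ι → κ → β) (s : ι → κ)
    [DecidablePred fun s' : ι → κ => ∀ i, V i (s' i) = V i (s i)] :
    (#{s' : ι → κ | ∀ i, V i (s' i) = V i (s i)} : ℝ)
      = (Fintype.card κ : ℝ) ^ Fintype.card ι * 2 ^ (-∑ i, surprisal (V i) (s i)) := by
  have hpi : ({s' : ι → κ | ∀ i, V i (s' i) = V i (s i)} : Finset (ι → κ))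
      = Fintype.piFinset fun i => {m | V i m = V i (s i)} := by
    ext s'; simp
  have hpow : (Fintype.card κ : ℝ) ^ Fintype.card ι = ∏ _i : ι, (Fintype.card κ : ℝ) := by simp
  rw [hpi, Fintype.card_piFinset, Nat.cast_prod, ← sum_neg_distrib,
    Real.rpow_sum_of_pos two_pos, hpow, ← prod_mul_distrib]
  refine prod_congr rfl fun i _ => ?_
  have hfiber : (0 : ℝ) < #{m | V i m = V i (s i)} := mod_cast card_fiber_pos (V i) (s i)
  have hcard : (0 : ℝ) < Fintype.card κ := mod_cast Fintype.card_pos_iff.2 ⟨s i⟩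
  rw [Real.rpow_neg two_pos.le, surprisal, Real.rpow_logb two_pos (by simp) (by positivity)]
  field_simp

lemma empiricalEntropy_eq_binEnt (v : κ → Bool) :
    empiricalEntropy v = binEnt (#{m | v m = true} / Fintype.card κ) := by
  rcases isEmpty_or_nonempty κ with hκ | hκ
  · simp [empiricalEntropy, binEnt]
  have hcard : (Fintype.card κ : ℝ) ≠ 0 := by simp
  have hsum : ∑ m, surprisal v m = ∑ b : Bool, (#{m | v m = b} : ℝ) *
      Real.logb 2 (Fintype.card κ / #{m | v m = b}) := by
    rw [← sum_fiberwise _ v]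
    refine sum_congr rfl fun b _ => ?_
    rw [← nsmul_eq_mul, ← sum_const]
    refine sum_congr rfl fun m hm => ?_
    rw [surprisal, (mem_filter.1 hm).2]
  have hcompl : (#{m | v m = true} + #{m | v m = false} : ℝ) = Fintype.card κ := by
    have h := card_filter_add_card_filter_not (s := (univ : Finset κ)) (fun m => v m = true)
    simp only [Bool.not_eq_true, card_univ] at h
    exact_mod_cast h
  have hone_sub : 1 - (#{m | v m = true} : ℝ) / Fintype.card κ
      = #{m | v m = false} / Fintype.card κ := by
    rw [← hcompl] at hcard ⊢
    field_simp
    ring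
  rw [empiricalEntropy, Fintype.expect_eq_sum_div_card, hsum, Fintype.sum_bool, binEnt, hone_sub,
    inv_div, inv_div]
  ring

lemma binEnt_le_one (x : ℝ) : binEnt x ≤ 1 := by
  have h : binEnt x = Real.binEntropy x / Real.log 2 := by
    unfold binEnt Real.binEntropy Real.logb
    ring
  rw [h, div_le_one (Real.log_pos one_lt_two)]
  exact Real.binEntropy_le_log_two

lemma empiricalEntropy_mem_Icc (v : κ → Bool) : empiricalEntropy v ∈ Set.Icc 0 1 :=
  ⟨expect_nonneg fun m _ => (surprisal_mem_Icc v m).1,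
    empiricalEntropy_eq_binEnt v ▸ binEnt_le_one _⟩

lemma meanEntropy_le_one (r : ℕ) : meanEntropy r ≤ 1 :=
  expect_le univ_nonempty fun v _ => (empiricalEntropy_mem_Icc v).2

lemma sum_apply_card_true (κ : Type*) [Fintype κ] [DecidableEq κ] (g : ℕ → ℝ) :
    ∑ v : κ → Bool, g #{m | v m = true}
      = ∑ j ∈ range (Fintype.card κ + 1), ((Fintype.card κ).choose j : ℝ) * g j := by
  have h := sum_powerset_apply_card g (x := (univ : Finset κ))
  simp only [card_univ, nsmul_eq_mul] at h
  rw [← h]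
  refine sum_bij' (fun v _ => univ.filter (v · = true)) (fun s _ m => decide (m ∈ s))
    ?_ ?_ ?_ ?_ ?_ <;> simp

lemma meanEntropy_eq_sum_div (r : ℕ) :
    meanEntropy r = (∑ i ∈ Icc 1 (r - 1), (r.choose i : ℝ) * binEnt (i / r)) / 2 ^ r := by
  rcases r with _ | k
  · simp [meanEntropy, empiricalEntropy]
  have hzero : binEnt 0 = 0 := by simp [binEnt]
  have hone : binEnt 1 = 0 := by simp [binEnt]
  have hself : ((k + 1 : ℕ) : ℝ) / (k + 1 : ℕ) = 1 := div_self (by positivity)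
  have h := sum_apply_card_true (Fin (k + 1)) fun j => binEnt (j / (k + 1 : ℕ))
  rw [Fintype.card_fin, sum_range_succ, sum_range_succ', hself, hone, Nat.cast_zero, zero_div,
    hzero, range_eq_Ico,
    sum_Ico_add' (fun i => ((k + 1).choose i : ℝ) * binEnt (i / (k + 1 : ℕ))) 0 k 1] at h
  simp only [meanEntropy, empiricalEntropy_eq_binEnt, Fintype.expect_eq_sum_div_card,
    Fintype.card_fin, Fintype.card_fun, Fintype.card_bool, Nat.cast_pow, Nat.cast_ofNat, h,
    mul_zero, add_zero, zero_add, Nat.add_sub_cancel]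
  rfl

lemma tau_eq_one_sub_meanEntropy {k : ℕ} (hk : 1 ≤ k) : tau k = 1 - meanEntropy (k + 1) := by
  have hzpow : (2 : ℝ) ^ ((1 : ℤ) - ((k + 1 : ℕ) : ℤ)) = 2 / 2 ^ (k + 1) := by
    rw [zpow_sub₀ two_ne_zero, zpow_one, zpow_natCast]
  have hne : (2 : ℝ) ^ (k + 1) - 2 ≠ 0 := by
    have h : (2 : ℝ) ^ 1 < 2 ^ (k + 1) := pow_lt_pow_right₀ one_lt_two (by lia)
    linarith
  have hfactor : (1 - (2 : ℝ) / 2 ^ (k + 1)) * (1 / (2 ^ (k + 1) - 2)) = 1 / 2 ^ (k + 1) := by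
    field_simp
  rw [tau, tauT, Hent, hzpow, ← mul_assoc, hfactor, meanEntropy_eq_sum_div, one_div_mul_eq_div]

end Entropy

section Counting

lemma cast_choose_sub_le (N q m : ℕ) :
    ((N - q).choose m : ℝ) ≤ N.choose m * Real.exp (-(q * m / N)) := by
  have hfactor : ∀ i, ((N - q - i : ℕ) : ℝ) ≤ (N - i : ℕ) * Real.exp (-(q / N)) := fun i => by
    rcases le_or_gt (N - q) i with h | h
    · rw [Nat.sub_eq_zero_of_le h, Nat.cast_zero]
      positivity
    have hN : (0 : ℝ) < N := mod_cast (by lia : 0 < N)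
    calc ((N - q - i : ℕ) : ℝ) = N - q - i := by
          rw [Nat.cast_sub h.le, Nat.cast_sub (by lia)]
      _ ≤ (N - i) * (-(q / N) + 1) := by
          have : 0 ≤ (i : ℝ) * (q / N) := by positivity
          have : (N : ℝ) * (q / N) = q := by field_simp
          linarith
      _ ≤ (N - i : ℕ) * Real.exp (-(q / N)) := by
          rw [Nat.cast_sub (by lia)]
          have : (i : ℝ) ≤ N := mod_cast (by lia : i ≤ N)
          gcongr
          exact Real.add_one_le_exp _
  have hdesc : ((N - q).descFactorial m : ℝ) ≤ N.descFactorial m * Real.exp (-(q * m / N)) := by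
    have hexp : Real.exp (-(q * m / N)) = ∏ _i ∈ range m, Real.exp (-(q / N)) := by
      rw [prod_const, card_range, ← Real.exp_nat_mul]
      ring_nf
    rw [Nat.descFactorial_eq_prod_range, Nat.descFactorial_eq_prod_range, Nat.cast_prod,
      Nat.cast_prod, hexp, ← prod_mul_distrib]
    exact prod_le_prod (fun i _ => Nat.cast_nonneg _) fun i _ => hfactor i
  rw [Nat.descFactorial_eq_factorial_mul_choose, Nat.descFactorial_eq_factorial_mul_choose,
    Nat.cast_mul, Nat.cast_mul, mul_assoc] at hdesc
  exact le_of_mul_le_mul_left hdesc (by positivity)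

lemma cast_pow_le_mul_choose {N r : ℕ} (h : 2 * r ≤ N) :
    (N : ℝ) ^ r ≤ 2 ^ r * r.factorial * N.choose r := by
  have hhalf : (N : ℝ) ≤ 2 * (N + 1 - r : ℕ) := mod_cast (by lia : N ≤ 2 * (N + 1 - r))
  calc (N : ℝ) ^ r ≤ (2 * (N + 1 - r : ℕ)) ^ r := by gcongr
    _ = 2 ^ r * r.factorial * ((N + 1 - r : ℕ) ^ r / r.factorial) := by
        rw [mul_pow]
        field_simp
    _ ≤ 2 ^ r * r.factorial * N.choose r := by
        gcongr
        exact Nat.pow_le_choose r N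

variable {α : Type*} [DecidableEq α]

lemma card_superset_disjoint_le {C S A : Finset α} (hS : S ⊆ C) (hA : A ⊆ C \ S) (n : ℕ) :
    #{W ∈ C.powersetCard n | S ⊆ W ∧ Disjoint W A} ≤ (#C - #S - #A).choose (n - #S) := by
  rw [← card_sdiff_of_subset hS, ← card_sdiff_of_subset hA, ← card_powersetCard]
  refine card_le_card_of_injOn (· \ S) (fun W hW => ?_)
    fun W hW W' hW' (hsdiff : W \ S = W' \ S) => ?_
  · simp only [coe_filter, mem_powersetCard, Set.mem_ofPred_eq] at hW
    obtain ⟨⟨hWC, rfl⟩, hSW, hWA⟩ := hW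
    rw [mem_coe, mem_powersetCard]
    refine ⟨fun x hx => ?_, card_sdiff_of_subset hSW⟩
    have hxW := (mem_sdiff.1 hx).1
    exact mem_sdiff.2 ⟨sdiff_subset_sdiff hWC le_rfl hx, disjoint_left.1 hWA hxW⟩
  · rw [← sdiff_union_of_subset (mem_filter.1 hW).2.1, hsdiff,
      sdiff_union_of_subset (mem_filter.1 hW').2.1]

lemma card_superset_disjoint_le_mul_exp {C S A : Finset α} (hS : S ⊆ C) (hA : A ⊆ C \ S) (n : ℕ) :
    (#{W ∈ C.powersetCard n | S ⊆ W ∧ Disjoint W A} : ℝ) ≤ (#C - #S).choose (n - #S) *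
      Real.exp (-(#A * (n - #S : ℕ) / (#C - #S : ℕ))) :=
  (Nat.cast_le.2 (card_superset_disjoint_le hS hA n)).trans (cast_choose_sub_le _ _ _)

lemma sum_card_filter_powersetCard_comm (C : Finset α) (n r : ℕ)
    (p : Finset α → Finset α → Prop) [∀ W, DecidablePred (p W)] :
    ∑ W ∈ C.powersetCard n, #{S ∈ W.powersetCard r | p W S}
      = ∑ S ∈ C.powersetCard r, #{W ∈ C.powersetCard n | S ⊆ W ∧ p W S} := by
  have hfilter : ∀ W ∈ C.powersetCard n, ({S ∈ W.powersetCard r | p W S} : Finset (Finset α))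
      = {S ∈ C.powersetCard r | S ⊆ W ∧ p W S} := fun W hW => by
    have hWC := (mem_powersetCard.1 hW).1
    ext S
    simp only [mem_filter, mem_powersetCard]
    exact ⟨fun ⟨⟨hSW, hS⟩, hp⟩ => ⟨⟨hSW.trans hWC, hS⟩, hSW, hp⟩,
      fun ⟨⟨_, hS⟩, hSW, hp⟩ => ⟨⟨hSW, hS⟩, hp⟩⟩
  rw [sum_congr rfl fun W hW => congrArg card (hfilter W hW)]
  exact sum_card_bipartiteAbove_eq_sum_card_bipartiteBelow (fun W S => S ⊆ W ∧ p W S)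

end Counting

section Halfspaces

variable {E : Type*} [AddCommGroup E] [Module ℝ E]

open scoped Classical in
/-- The traces on `C` of the closed half-spaces of `E`. -/
noncomputable def halfspaceCuts (C : Finset E) : Finset (Finset E) :=
  {A ∈ C.powerset | ∃ (f : Module.Dual ℝ E) (c : ℝ), A = {x ∈ C | c ≤ f x}}

open scoped Classical in
lemma filter_le_mem_halfspaceCuts (C : Finset E) (f : Module.Dual ℝ E) (c : ℝ) :
    {x ∈ C | c ≤ f x} ∈ halfspaceCuts C :=
  mem_filter.2 ⟨mem_powerset.2 (filter_subset _ _), f, c, rfl⟩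

lemma subset_of_mem_halfspaceCuts {C A : Finset E} (hA : A ∈ halfspaceCuts C) : A ⊆ C := by
  classical exact mem_powerset.1 (mem_filter.1 hA).1

open scoped Classical in
lemma disjoint_convexHull_of_mem_halfspaceCuts [DecidableEq E] {C A : Finset E}
    (hA : A ∈ halfspaceCuts C) :
    Disjoint (convexHull ℝ (A : Set E)) (convexHull ℝ (C \ A : Finset E)) := by
  obtain ⟨f, c, rfl⟩ := (mem_filter.1 hA).2
  have hin : convexHull ℝ (({x ∈ C | c ≤ f x} : Finset E) : Set E) ⊆ {x | c ≤ f x} :=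
    convexHull_min (by simp +contextual [Set.subset_def]) (convex_halfSpace_ge f.isLinear c)
  have hout : convexHull ℝ ((C \ {x ∈ C | c ≤ f x} : Finset E) : Set E) ⊆ {x | f x < c} :=
    convexHull_min (by simp +contextual [Set.subset_def]) (convex_halfSpace_lt f.isLinear c)
  exact Set.disjoint_left.2 fun x hx hx' =>
    not_lt_of_ge (Set.mem_ofPred.1 (hin hx)) (Set.mem_ofPred.1 (hout hx'))

lemma card_le_of_shatters_halfspaceCuts [DecidableEq E] [FiniteDimensional ℝ E]
    {C s : Finset E} (hs : (halfspaceCuts C).Shatters s) : #s ≤ Module.finrank ℝ E + 1 := by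
  classical
  by_contra! hcard
  have hdep : ¬ AffineIndependent ℝ ((↑) : s → E) := fun hind => by
    have h₁ := hind.card_le_finrank_succ
    have h₂ := (vectorSpan ℝ (Set.range ((↑) : s → E))).finrank_le
    rw [Fintype.card_coe] at h₁
    lia
  obtain ⟨I, y, hyI, hyIc⟩ := Convex.radon_partition hdep
  obtain ⟨A, hA, hsA⟩ := hs (t := {x ∈ s | x ∈ (↑) '' I}) (filter_subset _ _)
  have hmem : ∀ x : s, (x : E) ∈ A ↔ x ∈ I := fun x => by
    simpa using Finset.ext_iff.1 hsA x
  obtain ⟨B, hB, hsB⟩ := hs le_rfl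
  have hI : (↑) '' I ⊆ (A : Set E) := by
    rintro _ ⟨x, hx, rfl⟩
    exact (hmem x).2 hx
  have hIc : (↑) '' Iᶜ ⊆ ((C \ A : Finset E) : Set E) := by
    rintro _ ⟨x, hx, rfl⟩
    have hxB : (x : E) ∈ B := (Finset.inter_eq_left.1 hsB) x.2
    exact mem_sdiff.2 ⟨subset_of_mem_halfspaceCuts hB hxB, mt (hmem x).1 hx⟩
  exact Set.disjoint_left.1 (disjoint_convexHull_of_mem_halfspaceCuts hA)
    (convexHull_mono hI hyI) (convexHull_mono hIc hyIc)

lemma card_halfspaceCuts_le [FiniteDimensional ℝ E] (C : Finset E) :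
    #(halfspaceCuts C) ≤ ∑ j ∈ range (Module.finrank ℝ E + 2), (#C).choose j := by
  classical
  have hshatterer : (halfspaceCuts C).shatterer
      ⊆ (range (Module.finrank ℝ E + 2)).biUnion fun j => C.powersetCard j := fun s hs => by
    have hs := mem_shatterer.1 hs
    obtain ⟨B, hB, hsB⟩ := hs le_rfl
    have hsC : s ⊆ C := (inter_eq_left.1 hsB).trans (subset_of_mem_halfspaceCuts hB)
    have hcard := card_le_of_shatters_halfspaceCuts hs
    exact mem_biUnion.2 ⟨#s, mem_range.2 (by lia), mem_powersetCard.2 ⟨hsC, rfl⟩⟩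
  calc #(halfspaceCuts C) ≤ #(halfspaceCuts C).shatterer := card_le_card_shatterer _
    _ ≤ _ := card_le_card hshatterer
    _ ≤ ∑ j ∈ range (Module.finrank ℝ E + 2), #(C.powersetCard j) := card_biUnion_le
    _ = _ := by simp_rw [card_powersetCard]

open scoped Classical in
/-- The half-space (Tukey) depth of `b` in the finite set `D` is at least `K`: every closed
half-space with `b` on its boundary contains at least `K` points of `D`. -/
def DepthGE (D : Finset E) (K : ℝ) (b : E) : Prop :=
  ∀ f : Module.Dual ℝ E, K ≤ #{x ∈ D | f b ≤ f x}

lemma DepthGE.filter_not {D : Finset E} {K : ℝ} {b : E}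
    (h : DepthGE D K b) (p : E → Prop) [DecidablePred p] :
    DepthGE {x ∈ D | ¬ p x} (K - #{x ∈ D | p x}) b := by
  classical
  intro f
  rw [sub_le_iff_le_add]
  refine (h f).trans ?_
  have hcover : {x ∈ D | f b ≤ f x} ⊆ {x ∈ {x ∈ D | ¬ p x} | f b ≤ f x} ∪ {x ∈ D | p x} :=
    fun x hx => by
      simp only [mem_filter, mem_union] at hx ⊢
      tauto
  exact mod_cast (card_le_card hcover).trans (card_union_le _ _)

open scoped Classical in
lemma card_superset_notMem_convexHull_le [DecidableEq E] [TopologicalSpace E] [T2Space E]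
    [IsTopologicalAddGroup E] [ContinuousSMul ℝ E] [LocallyConvexSpace ℝ E]
    {C S D : Finset E} {K : ℝ} {b : E} (hS : S ⊆ C) (hD : D ⊆ C \ S) (hb : DepthGE D K b) (n : ℕ) :
    (#{W ∈ C.powersetCard n | S ⊆ W ∧ b ∉ convexHull ℝ ((W ∩ D : Finset E) : Set E)} : ℝ)
      ≤ #(halfspaceCuts D) *
        ((#C - #S).choose (n - #S) * Real.exp (-(K * (n - #S : ℕ) / (#C - #S : ℕ)))) := by
  have hcover : {W ∈ C.powersetCard n | S ⊆ W ∧ b ∉ convexHull ℝ ((W ∩ D : Finset E) : Set E)}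
      ⊆ {A ∈ halfspaceCuts D | K ≤ #A}.biUnion
        fun A => {W ∈ C.powersetCard n | S ⊆ W ∧ Disjoint W A} := fun W hW => by
    obtain ⟨hWC, hSW, hbW⟩ := mem_filter.1 hW
    obtain ⟨f, u, hfW, hfb⟩ := geometric_hahn_banach_closed_point (convex_convexHull ℝ _)
      ((W ∩ D).finite_toSet.isClosed_convexHull ℝ) hbW
    refine mem_biUnion.2 ⟨{x ∈ D | f b ≤ f x},
      mem_filter.2 ⟨filter_le_mem_halfspaceCuts D f.toLinearMap (f b), hb f.toLinearMap⟩,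
      mem_filter.2 ⟨hWC, hSW, disjoint_left.2 fun x hxW hx => ?_⟩⟩
    obtain ⟨hxD, hfx⟩ := mem_filter.1 hx
    have := hfW x (subset_convexHull ℝ _ (mem_coe.2 (mem_inter.2 ⟨hxW, hxD⟩)))
    linarith
  have hterm : ∀ A ∈ ({A ∈ halfspaceCuts D | K ≤ #A} : Finset (Finset E)),
      (#{W ∈ C.powersetCard n | S ⊆ W ∧ Disjoint W A} : ℝ) ≤ (#C - #S).choose (n - #S) *
        Real.exp (-(K * (n - #S : ℕ) / (#C - #S : ℕ))) := fun A hA => by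
    obtain ⟨hAcut, hKA⟩ := mem_filter.1 hA
    refine (card_superset_disjoint_le_mul_exp hS
      ((subset_of_mem_halfspaceCuts hAcut).trans hD) n).trans ?_
    gcongr
  calc _ ≤ ((∑ A ∈ halfspaceCuts D with K ≤ #A,
          #{W ∈ C.powersetCard n | S ⊆ W ∧ Disjoint W A} : ℕ) : ℝ) :=
        Nat.cast_le.2 ((card_le_card hcover).trans card_biUnion_le)
    _ ≤ #{A ∈ halfspaceCuts D | K ≤ #A} * _ := by
        rw [Nat.cast_sum, ← nsmul_eq_mul]
        exact sum_le_card_nsmul _ _ _ hterm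
    _ ≤ _ := by
        gcongr
        exact filter_subset _ _

end Halfspaces

section Faces

section General

variable {E : Type*} [AddCommGroup E] [Module ℝ E]

lemma inter_convexHull_subset_of_isExtreme {A F T : Set E} (hF : IsExtreme ℝ A F)
    (hT : convexHull ℝ T ⊆ A) : F ∩ convexHull ℝ T ⊆ convexHull ℝ (F ∩ T) := by
  have hconvex : Convex ℝ {x ∈ convexHull ℝ T | x ∈ F → x ∈ convexHull ℝ (F ∩ T)} := by
    rw [convex_iff_openSegment_subset]
    rintro x ⟨hx, hxF⟩ y ⟨hy, hyF⟩ z hz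
    refine ⟨(convex_convexHull ℝ T).openSegment_subset hx hy hz, fun hzF => ?_⟩
    exact (convex_convexHull ℝ _).openSegment_subset
      (hxF (hF.left_mem_of_mem_openSegment (hT hx) (hT hy) hzF hz))
      (hyF (hF.right_mem_of_mem_openSegment (hT hx) (hT hy) hzF hz)) hz
  have hsub : convexHull ℝ T ⊆ {x ∈ convexHull ℝ T | x ∈ F → x ∈ convexHull ℝ (F ∩ T)} :=
    convexHull_min (fun x hx => ⟨subset_convexHull ℝ T hx,
      fun hxF => subset_convexHull ℝ _ ⟨hxF, hx⟩⟩) hconvex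
  exact fun x hx => (hsub hx.2).2 hx.1

lemma disjoint_convexHull_diff_affineSpan_of_isExtreme {T F : Set E}
    (hF : IsExtreme ℝ (convexHull ℝ T) F) : Disjoint F (convexHull ℝ (T \ affineSpan ℝ F)) := by
  refine Set.disjoint_iff_inter_eq_empty.2 (Set.subset_empty_iff.1 ?_)
  refine (inter_convexHull_subset_of_isExtreme hF (convexHull_mono Set.sdiff_subset)).trans ?_
  rw [← Set.inter_sdiff_assoc, Set.sdiff_eq_empty.2, convexHull_empty]
  exact Set.inter_subset_left.trans (subset_affineSpan ℝ F)

lemma exists_affineBasis_of_isExtreme {W : Finset E} {F : Set E}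
    (hF : IsExtreme ℝ (convexHull ℝ (W : Set E)) F) (hne : F.Nonempty) :
    ∃ S ⊆ W, (S : Set E) ⊆ F ∧ affineSpan ℝ (S : Set E) = affineSpan ℝ F ∧
      #S = Module.finrank ℝ (vectorSpan ℝ F) + 1 := by
  obtain ⟨t, ht, hspan, hind⟩ := exists_affineIndependent ℝ E (F ∩ W : Set E)
  obtain ⟨S, rfl⟩ := (W.finite_toSet.subset (ht.trans Set.inter_subset_right)).exists_finset_coe
  have hSF : (S : Set E) ⊆ F := ht.trans Set.inter_subset_left
  have hFS : F ⊆ affineSpan ℝ (S : Set E) := fun x hx => hspan ▸ convexHull_subset_affineSpan _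
    (inter_convexHull_subset_of_isExtreme hF subset_rfl ⟨hx, hF.subset hx⟩)
  have hspanF : affineSpan ℝ (S : Set E) = affineSpan ℝ F :=
    le_antisymm (affineSpan_mono ℝ hSF) (affineSpan_le.2 hFS)
  refine ⟨S, mod_cast ht.trans Set.inter_subset_right, hSF, hspanF, ?_⟩
  have : Nonempty (S : Set E) :=
    ((affineSpan_nonempty ℝ).1 (hne.mono hFS)).to_subtype
  have hcard := hind.finrank_vectorSpan_add_one
  rw [Subtype.range_coe, ← direction_affineSpan, hspanF, direction_affineSpan] at hcard
  simpa using hcard.symm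

lemma inter_affineSpan_eq_of_isExposed [TopologicalSpace E] {A F : Set E}
    (hF : IsExposed ℝ A F) (hne : F.Nonempty) : A ∩ affineSpan ℝ F = F := by
  refine Set.Subset.antisymm ?_ (Set.subset_inter hF.subset (subset_affineSpan ℝ F))
  obtain ⟨l, rfl⟩ := hF hne
  obtain ⟨x₀, hx₀A, hx₀⟩ := hne
  rintro x ⟨hxA, hx⟩
  have hlx : l x = l x₀ := by
    refine affineSpan_induction (p := fun x => l x = l x₀) hx
      (fun y hy => le_antisymm (hx₀ y hy.1) (hy.2 x₀ hx₀A)) fun c u v w hu hv hw => ?_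
    simp [hu, hv, hw]
  exact ⟨hxA, fun y hy => hlx ▸ hx₀ y hy⟩

lemma expect_mem_of_convex [Module ℚ≥0 E] {ι : Type*} {s : Finset ι} {z : ι → E} {F : Set E}
    (hF : Convex ℝ F) (hs : s.Nonempty) (hz : ∀ i ∈ s, z i ∈ F) : 𝔼 i ∈ s, z i ∈ F := by
  have hcard : (#s : ℝ) ≠ 0 := by simpa using hs.ne_empty
  have h := hF.sum_mem (t := s) (w := fun _ => (#s : ℝ)⁻¹) (fun _ _ => by positivity)
    (by simp [hcard]) hz
  rwa [← smul_sum, ← card_smul_expect, ← Nat.cast_smul_eq_nsmul ℝ, inv_smul_smul₀ hcard] at h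

end General

lemma isExposed_of_isFace {d : ℕ} {P F : Set (Fin d → ℝ)} (h : IsFace P F) : IsExposed ℝ P F := by
  rcases h with rfl | ⟨a, rfl⟩
  · exact IsExposed.refl _
  · exact fun _ => ⟨(dotProductEquiv ℝ (Fin d) a).toContinuousLinearMap, rfl⟩

/-- The witness that a face leaves among the vertices: the barycentre of `S` is not a convex
combination of the points of `W` lying outside the affine span of `S`. -/
def IsFaceCandidate {d : ℕ} (W S : Finset (Fin d → ℝ)) : Prop :=
  𝔼 x ∈ S, x ∉ convexHull ℝ ((W : Set (Fin d → ℝ)) \ affineSpan ℝ (S : Set (Fin d → ℝ)))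

open scoped Classical in
lemma faceCount_le_card_isFaceCandidate {d k : ℕ} (hk : 1 ≤ k) (W : Finset (Fin d → ℝ)) :
    faceCount k (convexHull ℝ (W : Set (Fin d → ℝ)))
      ≤ #{S ∈ W.powersetCard (k + 1) | IsFaceCandidate W S} := by
  rw [faceCount]
  set P := convexHull ℝ (W : Set (Fin d → ℝ))
  rw [← Set.ncard_coe_finset]
  refine (Set.ncard_le_ncard ?_ ((finite_toSet _).image _)).trans (Set.ncard_image_le
    (f := fun S : Finset (Fin d → ℝ) => P ∩ affineSpan ℝ (S : Set (Fin d → ℝ)))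
    (finite_toSet _))
  rintro F ⟨hface, hdim⟩
  have hexposed := isExposed_of_isFace hface
  have hne : F.Nonempty := Set.nonempty_iff_ne_empty.2 fun hempty => by
    rw [hempty, vectorSpan_empty, finrank_bot] at hdim
    lia
  obtain ⟨S, hSW, hSF, hspan, hcard⟩ := exists_affineBasis_of_isExtreme hexposed.isExtreme hne
  rw [hdim] at hcard
  refine ⟨S, mem_coe.2 (mem_filter.2 ⟨mem_powersetCard.2 ⟨hSW, hcard⟩, ?_⟩), ?_⟩
  · rw [IsFaceCandidate, hspan]
    exact Set.disjoint_left.1 (disjoint_convexHull_diff_affineSpan_of_isExtreme hexposed.isExtreme)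
      (expect_mem_of_convex (hexposed.convex (convex_convexHull ℝ _)) (card_pos.1 (by lia)) hSF)
  · simp only [hspan]
    exact inter_affineSpan_eq_of_isExposed hexposed hne

end Faces

section FaceDensity

variable {d k : ℕ} {C S : Finset (Fin d → ℝ)} {K : ℝ}

open scoped Classical in
/-- The barycentre of `S` has half-space depth at least `K` among the points of `C` that do not
lie in the affine span of `S`. -/
def IsDeep (C : Finset (Fin d → ℝ)) (K : ℝ) (S : Finset (Fin d → ℝ)) : Prop :=
  DepthGE {x ∈ C | x ∉ affineSpan ℝ (S : Set (Fin d → ℝ))} K (𝔼 x ∈ S, x)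

open scoped Classical in
lemma card_isFaceCandidate_le_of_isDeep (hS : S ⊆ C) (hdeep : IsDeep C K S) (n : ℕ) :
    (#{W ∈ C.powersetCard n | S ⊆ W ∧ IsFaceCandidate W S} : ℝ)
      ≤ (#C - #S).choose (n - #S) * ((∑ j ∈ range (d + 2), (#C).choose j : ℕ) *
        Real.exp (-(K * (n - #S : ℕ) / (#C - #S : ℕ)))) := by
  set D : Finset (Fin d → ℝ) := {x ∈ C | x ∉ affineSpan ℝ (S : Set (Fin d → ℝ))}
  have hD : D ⊆ C \ S := fun x hx => mem_sdiff.2 ⟨(mem_filter.1 hx).1,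
    fun hxS => (mem_filter.1 hx).2 (subset_affineSpan ℝ _ hxS)⟩
  have houtside : ∀ W ∈ C.powersetCard n, (W : Set (Fin d → ℝ)) \ affineSpan ℝ (S : Set (Fin d → ℝ))
      = (W ∩ D : Finset (Fin d → ℝ)) := fun W hW => by
    have hWC := (mem_powersetCard.1 hW).1
    ext x
    simp only [D, Set.mem_sdiff, SetLike.mem_coe, mem_inter, mem_filter]
    exact ⟨fun ⟨hxW, hx⟩ => ⟨hxW, hWC hxW, hx⟩, fun ⟨hxW, _, hx⟩ => ⟨hxW, hx⟩⟩
  have hfilter : {W ∈ C.powersetCard n | S ⊆ W ∧ IsFaceCandidate W S} =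
      {W ∈ C.powersetCard n | S ⊆ W ∧
        𝔼 x ∈ S, x ∉ convexHull ℝ ((W ∩ D : Finset (Fin d → ℝ)) : Set (Fin d → ℝ))} :=
    filter_congr fun W hW => by rw [IsFaceCandidate, houtside W hW]
  have hcuts : #(halfspaceCuts D) ≤ ∑ j ∈ range (d + 2), (#C).choose j := by
    refine (card_halfspaceCuts_le D).trans ?_
    rw [Module.finrank_fin_fun]
    exact sum_le_sum fun j _ => Nat.choose_le_choose j (card_le_card (filter_subset _ _))
  rw [hfilter, mul_left_comm]
  refine (card_superset_notMem_convexHull_le hS hD hdeep n).trans ?_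
  gcongr

open scoped Classical in
lemma sum_card_isFaceCandidate_le (C : Finset (Fin d → ℝ)) (K : ℝ) (n r : ℕ) :
    (∑ W ∈ C.powersetCard n, #{S ∈ W.powersetCard r | IsFaceCandidate W S} : ℝ)
      ≤ (#C - r).choose (n - r) * (#{S ∈ C.powersetCard r | ¬ IsDeep C K S} +
        (#C).choose r * ((∑ j ∈ range (d + 2), (#C).choose j : ℕ) *
          Real.exp (-(K * (n - r : ℕ) / (#C - r : ℕ))))) := by
  set M := (#C - r).choose (n - r)
  set B : ℝ := (∑ j ∈ range (d + 2), (#C).choose j : ℕ) *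
    Real.exp (-(K * (n - r : ℕ) / (#C - r : ℕ)))
  have hterm : ∀ S ∈ C.powersetCard r, (#{W ∈ C.powersetCard n | S ⊆ W ∧ IsFaceCandidate W S} : ℝ)
      ≤ M * ((if ¬ IsDeep C K S then 1 else 0) + B) := fun S hS => by
    obtain ⟨hSC, rfl⟩ := mem_powersetCard.1 hS
    by_cases hdeep : IsDeep C K S
    · simpa only [hdeep, not_true_eq_false, if_false, zero_add]
        using card_isFaceCandidate_le_of_isDeep hSC hdeep n
    · rw [if_pos hdeep]
      have hsup := card_superset_disjoint_le hSC (empty_subset _) n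
      simp only [disjoint_empty_right, and_true, card_empty, tsub_zero] at hsup
      have hcand : #{W ∈ C.powersetCard n | S ⊆ W ∧ IsFaceCandidate W S} ≤ M :=
        (card_le_card (monotone_filter_right _ fun W _ => And.left)).trans hsup
      calc (#{W ∈ C.powersetCard n | S ⊆ W ∧ IsFaceCandidate W S} : ℝ) ≤ M := mod_cast hcand
        _ ≤ M * (1 + B) := le_mul_of_one_le_right (by positivity)
            (le_add_of_nonneg_right (by positivity))
  calc _ = ∑ S ∈ C.powersetCard r, (#{W ∈ C.powersetCard n | S ⊆ W ∧ IsFaceCandidate W S} : ℝ) :=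
        mod_cast sum_card_filter_powersetCard_comm C n r IsFaceCandidate
    _ ≤ ∑ S ∈ C.powersetCard r, M * ((if ¬ IsDeep C K S then 1 else 0) + B) := sum_le_sum hterm
    _ = _ := by
        rw [← mul_sum, sum_add_distrib, sum_boole, sum_const, nsmul_eq_mul, card_powersetCard]

lemma faceDensity_nonneg (k : ℕ) (W : Finset (Fin d → ℝ)) : 0 ≤ faceDensity k W := by
  unfold faceDensity
  positivity

open scoped Classical in
lemma expect_faceDensity_le (hk : 1 ≤ k) (C : Finset (Fin d → ℝ)) (K : ℝ) (n : ℕ) :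
    𝔼 W ∈ C.powersetCard n, faceDensity k W
      ≤ #{S ∈ C.powersetCard (k + 1) | ¬ IsDeep C K S} / (#C).choose (k + 1) +
        (∑ j ∈ range (d + 2), (#C).choose j : ℕ) *
          Real.exp (-(K * (n - (k + 1) : ℕ) / (#C - (k + 1) : ℕ))) := by
  have hdensity : ∀ W ∈ C.powersetCard n, faceDensity k W
      ≤ #{S ∈ W.powersetCard (k + 1) | IsFaceCandidate W S} / (n.choose (k + 1) : ℝ) :=
    fun W hW => by
      rw [faceDensity, (mem_powersetCard.1 hW).2]
      gcongr
      exact faceCount_le_card_isFaceCandidate hk W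
  rcases lt_or_ge n (k + 1) with hkn | hkn
  · refine (expect_le_expect hdensity).trans ?_
    rw [Nat.choose_eq_zero_of_lt hkn]
    simp only [CharP.cast_eq_zero, div_zero, expect_const_zero]
    positivity
  rcases lt_or_ge #C n with hnC | hnC
  · rw [powersetCard_eq_empty.2 hnC, expect_empty]
    positivity
  have hchoose : ((#C).choose n * n.choose (k + 1) : ℝ)
      = (#C).choose (k + 1) * (#C - (k + 1)).choose (n - (k + 1)) :=
    mod_cast Nat.choose_mul hkn
  have hCn : (0 : ℝ) < (#C).choose n := mod_cast Nat.choose_pos hnC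
  have hn : (0 : ℝ) < n.choose (k + 1) := mod_cast Nat.choose_pos hkn
  have hC : (0 : ℝ) < (#C).choose (k + 1) := mod_cast Nat.choose_pos (hkn.trans hnC)
  calc 𝔼 W ∈ C.powersetCard n, faceDensity k W
      ≤ 𝔼 W ∈ C.powersetCard n,
          #{S ∈ W.powersetCard (k + 1) | IsFaceCandidate W S} / (n.choose (k + 1) : ℝ) :=
        expect_le_expect hdensity
    _ = (∑ W ∈ C.powersetCard n, #{S ∈ W.powersetCard (k + 1) | IsFaceCandidate W S} : ℝ) /
          ((#C).choose n * n.choose (k + 1)) := by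
        rw [expect_eq_sum_div_card, ← sum_div, div_div, card_powersetCard, mul_comm]
    _ ≤ _ := by
        rw [hchoose, div_le_iff₀ (by rw [← hchoose]; positivity)]
        refine (sum_card_isFaceCandidate_le C K n (k + 1)).trans_eq ?_
        field_simp

end FaceDensity

section Cube

variable {d r : ℕ}

lemma bv_injective : Function.Injective (bv : (Fin d → Bool) → Fin d → ℝ) := fun x y h => by
  ext i
  have hi := congrFun h i
  cases hx : x i <;> cases hy : y i <;> simp_all [bv]

lemma mem_cubeV {x : Fin d → ℝ} : x ∈ cubeV d ↔ ∃ y, bv y = x := by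
  simp [cubeV]

lemma card_cubeV (d : ℕ) : #(cubeV d) = 2 ^ d := by
  rw [cubeV, card_image_of_injective _ bv_injective]
  simp

/-- The vertex of the cube whose `i`-th coordinate is the entry in column `s i` of the `i`-th row of
the Boolean matrix `V`. A constant `s` selects a column of `V`. -/
def selectPoint (V : Fin d → Fin r → Bool) (s : Fin d → Fin r) : Fin d → ℝ :=
  bv fun i => V i (s i)

open scoped Classical in
/-- The set of columns of the Boolean matrix `V`, as vertices of the cube. -/
noncomputable def columnSet (V : Fin d → Fin r → Bool) : Finset (Fin d → ℝ) :=
  univ.image fun m => selectPoint V fun _ => m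

lemma selectPoint_mem_cubeV (V : Fin d → Fin r → Bool) (s : Fin d → Fin r) :
    selectPoint V s ∈ cubeV d :=
  mem_cubeV.2 ⟨_, rfl⟩

lemma selectPoint_eq_selectPoint_iff {V : Fin d → Fin r → Bool} {s s' : Fin d → Fin r} :
    selectPoint V s = selectPoint V s' ↔ ∀ i, V i (s i) = V i (s' i) :=
  bv_injective.eq_iff.trans funext_iff

lemma exists_columnSet_eq {S : Finset (Fin d → ℝ)} (hS : S ∈ (cubeV d).powersetCard r) :
    ∃ V : Fin d → Fin r → Bool, columnSet V = S ∧
      𝔼 x ∈ S, x = 𝔼 m, selectPoint V fun _ => m := by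
  obtain ⟨hSC, hcard⟩ := mem_powersetCard.1 hS
  let e := S.equivFinOfCardEq hcard
  choose y hy using fun m : Fin r => mem_cubeV.1 (hSC (e.symm m).2)
  have hcol : ∀ m, selectPoint (fun i m => y m i) (fun _ => m) = e.symm m := hy
  refine ⟨fun i m => y m i, ?_, ?_⟩
  · ext x
    simp only [columnSet, hcol, mem_image, mem_univ, true_and]
    exact ⟨fun ⟨m, hm⟩ => hm ▸ (e.symm m).2, fun hx => ⟨e ⟨x, hx⟩, by simp⟩⟩
  · simp only [hcol]
    exact expect_bij' (fun x hx => e ⟨x, hx⟩) (fun m _ => e.symm m) (by simp) (by simp) (by simp)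
      (by simp) (by simp)

lemma expect_selectPoint_add [NeZero r] (V : Fin d → Fin r → Bool) (s : Fin d → Fin r) :
    𝔼 m, selectPoint V (fun i => s i + m) = 𝔼 m, selectPoint V fun _ => m := by
  ext i
  simp only [expect_apply]
  exact Fintype.expect_equiv (Equiv.addLeft (s i)) _ _ fun _ => rfl

/-- The barycentre of the columns is also the barycentre of the cyclic shifts of any selection, so
every half-space through it contains one of the `r` shifts. -/
lemma pow_le_mul_card_le_apply_selectPoint [NeZero r] (V : Fin d → Fin r → Bool)
    (f : Module.Dual ℝ (Fin d → ℝ)) :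
    r ^ d ≤ r * #{s | f (𝔼 m, selectPoint V fun _ => m) ≤ f (selectPoint V s)} := by
  set A : Finset (Fin d → Fin r) := {s | f (𝔼 m, selectPoint V fun _ => m) ≤ f (selectPoint V s)}
  have hcover : univ ⊆ univ.biUnion fun m : Fin r => A.image fun s i => s i - m := fun s _ => by
    obtain ⟨m, -, hm⟩ : ∃ m ∈ univ, f (𝔼 m, selectPoint V fun _ => m)
        ≤ f (selectPoint V fun i => s i + m) := by
      refine exists_le_of_le_expect univ_nonempty ?_
      exact (expect_selectPoint_add V s ▸ map_expect (f.restrictScalars ℚ≥0) _ univ).le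
    simp only [mem_biUnion, mem_univ, true_and, mem_image]
    exact ⟨m, fun i => s i + m, by simpa [A] using hm, by simp⟩
  calc r ^ d = #(univ : Finset (Fin d → Fin r)) := by simp
    _ ≤ ∑ m : Fin r, #(A.image fun s i => s i - m) := (card_le_card hcover).trans card_biUnion_le
    _ ≤ ∑ _m : Fin r, #A := sum_le_sum fun m _ => card_image_le
    _ = r * #A := by simp

lemma card_sum_surprisal_lt_le {δ : ℝ} (hδ : 0 < δ) (hd : 0 < d) (hr : 2 * r ^ 3 / δ ^ 2 ≤ d)
    (V : Fin d → Fin r → Bool) :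
    2 * r * #{s : Fin d → Fin r | ∑ i, surprisal (V i) (s i)
      < ∑ i, empiricalEntropy (V i) - δ * d} ≤ (r : ℝ) ^ d := by
  set B : Finset (Fin d → Fin r) := {s | ∑ i, surprisal (V i) (s i)
      < ∑ i, empiricalEntropy (V i) - δ * d}
  have hcheb : #B * (δ * d) ^ 2 ≤ (r : ℝ) ^ d * (d * r ^ 2) := by
    have h := card_sum_lt_sum_expect_sub_mul_sq_le
      (fun i => surprisal_mem_Icc (V i)) (by positivity : 0 ≤ δ * d)
    rwa [Fintype.card_fin, Fintype.card_fin] at h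
  have hd' : (0 : ℝ) < d := mod_cast hd
  rw [div_le_iff₀ (by positivity)] at hr
  refine le_of_mul_le_mul_right ?_ (by positivity : 0 < (δ * d) ^ 2)
  calc 2 * r * #B * (δ * d) ^ 2 = 2 * r * (#B * (δ * d) ^ 2) := by ring
    _ ≤ 2 * r * ((r : ℝ) ^ d * (d * r ^ 2)) := by gcongr
    _ = (r : ℝ) ^ d * d * (2 * r ^ 3) := by ring
    _ ≤ (r : ℝ) ^ d * d * (d * δ ^ 2) := by gcongr
    _ = (r : ℝ) ^ d * (δ * d) ^ 2 := by ring

lemma card_le_mul_card_image_selectPoint [DecidableEq (Fin d → ℝ)] {V : Fin d → Fin r → Bool}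
    {T : Finset (Fin d → Fin r)} {h : ℝ} (hT : ∀ s ∈ T, h ≤ ∑ i, surprisal (V i) (s i)) :
    (#T : ℝ) ≤ r ^ d * 2 ^ (-h) * #(T.image (selectPoint V)) := by
  have hfiber : ∀ x ∈ T.image (selectPoint V),
      (#{s ∈ T | selectPoint V s = x} : ℝ) ≤ r ^ d * 2 ^ (-h) := fun x hx => by
    obtain ⟨s, hs, rfl⟩ := mem_image.1 hx
    calc (#{s' ∈ T | selectPoint V s' = selectPoint V s} : ℝ)
        ≤ #{s' : Fin d → Fin r | ∀ i, V i (s' i) = V i (s i)} := by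
          refine mod_cast card_le_card fun s' hs' => ?_
          simpa using selectPoint_eq_selectPoint_iff.1 (mem_filter.1 hs').2
      _ = r ^ d * 2 ^ (-∑ i, surprisal (V i) (s i)) := by simp [card_forall_apply_eq_apply]
      _ ≤ r ^ d * 2 ^ (-h) := by
          gcongr
          · exact one_le_two
          · exact hT s hs
  calc (#T : ℝ) = ∑ x ∈ T.image (selectPoint V), (#{s ∈ T | selectPoint V s = x} : ℝ) :=
        mod_cast card_eq_sum_card_image (selectPoint V) T
    _ ≤ ∑ _x ∈ T.image (selectPoint V), (r ^ d * 2 ^ (-h) : ℝ) := sum_le_sum hfiber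
    _ = r ^ d * 2 ^ (-h) * #(T.image (selectPoint V)) := by rw [sum_const, nsmul_eq_mul, mul_comm]

lemma depthGE_cubeV_expect_selectPoint [NeZero r] {c δ : ℝ} (hδ : 0 < δ) (hd : 0 < d)
    (hr : 2 * r ^ 3 / δ ^ 2 ≤ d) {V : Fin d → Fin r → Bool}
    (hV : c * d ≤ ∑ i, empiricalEntropy (V i)) :
    DepthGE (cubeV d) (2 ^ ((c - δ) * d) / (2 * r)) (𝔼 m, selectPoint V fun _ => m) := by
  classical
  intro f
  set A : Finset (Fin d → Fin r) := {s | f (𝔼 m, selectPoint V fun _ => m) ≤ f (selectPoint V s)}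
    with hA
  set B : Finset (Fin d → Fin r) := {s | ∑ i, surprisal (V i) (s i)
      < ∑ i, empiricalEntropy (V i) - δ * d} with hB
  have hr0 : (0 : ℝ) < r := mod_cast Nat.pos_of_neZero r
  have hshift : (r : ℝ) ^ d ≤ r * #A := mod_cast pow_le_mul_card_le_apply_selectPoint V f
  have hatypical : 2 * r * #B ≤ (r : ℝ) ^ d := card_sum_surprisal_lt_le hδ hd hr V
  have hsdiff : (#A : ℝ) ≤ #(A \ B) + #B := mod_cast card_le_card_sdiff_add_card
  have himage : (A \ B).image (selectPoint V) ⊆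
      {x ∈ cubeV d | f (𝔼 m, selectPoint V fun _ => m) ≤ f x} := by
    refine image_subset_iff.2 fun s hs => mem_filter.2 ⟨selectPoint_mem_cubeV V s, ?_⟩
    simpa [hA] using (mem_sdiff.1 hs).1
  have htypical : (#(A \ B) : ℝ) ≤ r ^ d * 2 ^ (-((c - δ) * d)) *
      #((A \ B).image (selectPoint V)) := by
    refine card_le_mul_card_image_selectPoint fun s hs => ?_
    have hs' : s ∉ B := (mem_sdiff.1 hs).2
    simp only [hB, mem_filter, mem_univ, true_and, not_lt] at hs'
    linarith
  refine le_trans ?_ (Nat.cast_le.2 (card_le_card himage))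
  rw [div_le_iff₀ (by positivity)]
  refine le_of_mul_le_mul_left ?_ (by positivity : 0 < (r : ℝ) ^ d * 2 ^ (-((c - δ) * d)))
  calc (r : ℝ) ^ d * 2 ^ (-((c - δ) * d)) * 2 ^ ((c - δ) * d) = r ^ d := by
        rw [mul_assoc, ← Real.rpow_add two_pos, neg_add_cancel, Real.rpow_zero, mul_one]
    _ ≤ #(A \ B) * (2 * r) := by nlinarith
    _ ≤ r ^ d * 2 ^ (-((c - δ) * d)) * #((A \ B).image (selectPoint V)) * (2 * r) := by gcongr
    _ = _ := by ring

lemma apply_eq_apply_of_mem_affineSpan_columnSet {V : Fin d → Fin r → Bool} {x : Fin d → ℝ}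
    (hx : x ∈ affineSpan ℝ (columnSet V : Set (Fin d → ℝ))) {i j : Fin d} (hij : V i = V j) :
    x i = x j := by
  refine affineSpan_induction (p := fun x => x i = x j) hx (fun y hy => ?_) ?_
  · obtain ⟨m, -, rfl⟩ := mem_image.1 hy
    simp [selectPoint, bv, hij]
  · intro c u v w hu hv hw
    simp [hu, hv, hw]

open scoped Classical in
lemma card_cubeV_inter_affineSpan_columnSet_le (V : Fin d → Fin r → Bool) :
    #{x ∈ cubeV d | x ∈ affineSpan ℝ (columnSet V : Set (Fin d → ℝ))} ≤ 2 ^ 2 ^ r := by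
  let extend (g : (Fin r → Bool) → Bool) : Fin d → ℝ := bv fun i => g (V i)
  have hsub : {x ∈ cubeV d | x ∈ affineSpan ℝ (columnSet V : Set (Fin d → ℝ))}
      ⊆ univ.image extend := fun x hx => by
    obtain ⟨hxC, hx⟩ := mem_filter.1 hx
    obtain ⟨y, rfl⟩ := mem_cubeV.1 hxC
    have hy : Function.FactorsThrough y V := fun i j hij => by
      have hbv := apply_eq_apply_of_mem_affineSpan_columnSet hx hij
      cases hi : y i <;> cases hj : y j <;> simp_all [bv]
    refine mem_image.2 ⟨Function.extend V y fun _ => false, mem_univ _, ?_⟩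
    simp only [extend, hy.extend_apply]
  calc _ ≤ #(univ.image extend) := card_le_card hsub
    _ ≤ #(univ : Finset ((Fin r → Bool) → Bool)) := card_image_le
    _ = 2 ^ 2 ^ r := by simp

lemma isDeep_of_le_sum_empiricalEntropy [NeZero r] {c δ : ℝ} (hδ : 0 < δ) (hd : 0 < d)
    (hr : 2 * r ^ 3 / δ ^ 2 ≤ d) {V : Fin d → Fin r → Bool} {S : Finset (Fin d → ℝ)}
    (hVS : columnSet V = S) (hmean : 𝔼 x ∈ S, x = 𝔼 m, selectPoint V fun _ => m)
    (hV : c * d ≤ ∑ i, empiricalEntropy (V i)) {K : ℝ}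
    (hK : K + 2 ^ 2 ^ r ≤ 2 ^ ((c - δ) * d) / (2 * r)) :
    IsDeep (cubeV d) K S := by
  classical
  have hdepth := (depthGE_cubeV_expect_selectPoint hδ hd hr hV).filter_not
    (· ∈ affineSpan ℝ (columnSet V : Set (Fin d → ℝ)))
  have hspan : (#{x ∈ cubeV d | x ∈ affineSpan ℝ (columnSet V : Set (Fin d → ℝ))} : ℝ)
      ≤ 2 ^ 2 ^ r := mod_cast card_cubeV_inter_affineSpan_columnSet_le V
  rw [IsDeep, hmean, ← hVS]
  intro f
  refine le_trans ?_ ((hdepth f).trans (le_of_eq (by congr!)))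
  linarith

lemma card_sum_empiricalEntropy_lt_mul_sq_le {δ : ℝ} (hδ : 0 ≤ δ) (d r : ℕ) :
    #{V : Fin d → Fin r → Bool | ∑ i, empiricalEntropy (V i) < (meanEntropy r - δ) * d}
      * (δ * d) ^ 2 ≤ ((2 : ℝ) ^ r) ^ d * d := by
  have hcheb := card_sum_lt_sum_expect_sub_mul_sq_le (ι := Fin d)
    (f := fun _ (v : Fin r → Bool) => empiricalEntropy v)
    (fun _ => empiricalEntropy_mem_Icc) (by positivity : 0 ≤ δ * d)
  have hmean : (meanEntropy r - δ) * d = ∑ _i : Fin d, 𝔼 v : Fin r → Bool, empiricalEntropy v -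
      δ * d := by
    rw [sum_const, card_univ, Fintype.card_fin, nsmul_eq_mul, meanEntropy]
    ring
  rw [hmean]
  simpa using hcheb

end Cube

section Asymptotics

open scoped Classical in
lemma card_not_isDeep_le_card_sum_empiricalEntropy_lt {d r : ℕ} [NeZero r] {c δ K : ℝ} (hδ : 0 < δ)
    (hd : 0 < d) (hr : 2 * r ^ 3 / δ ^ 2 ≤ d)
    (hK : K + 2 ^ 2 ^ r ≤ 2 ^ ((c - δ) * d) / (2 * r)) :
    #{S ∈ (cubeV d).powersetCard r | ¬ IsDeep (cubeV d) K S}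
      ≤ #{V : Fin d → Fin r → Bool | ∑ i, empiricalEntropy (V i) < c * d} := by
  refine card_le_card_of_surjOn columnSet fun S hS => ?_
  obtain ⟨hSC, hshallow⟩ := mem_filter.1 hS
  obtain ⟨V, hVS, hmean⟩ := exists_columnSet_eq hSC
  refine ⟨V, ?_, hVS⟩
  by_contra hV
  simp only [coe_filter, mem_univ, true_and, Set.mem_ofPred_eq, not_lt] at hV
  exact hshallow (isDeep_of_le_sum_empiricalEntropy hδ hd hr hVS hmean hV hK)

open scoped Classical in
lemma card_not_isDeep_div_choose_le {d r : ℕ} [NeZero r] {δ K : ℝ} (hδ : 0 < δ) (hd : 0 < d)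
    (hr : 2 * r ^ 3 / δ ^ 2 ≤ d) (hrd : 2 * r ≤ 2 ^ d)
    (hK : K + 2 ^ 2 ^ r ≤ 2 ^ ((meanEntropy r - δ - δ) * d) / (2 * r)) :
    (#{S ∈ (cubeV d).powersetCard r | ¬ IsDeep (cubeV d) K S} : ℝ) / (2 ^ d).choose r
      ≤ 2 ^ r * r.factorial / δ ^ 2 / d := by
  set N := #{V : Fin d → Fin r → Bool | ∑ i, empiricalEntropy (V i) < (meanEntropy r - δ) * d}
  have hle : (#{S ∈ (cubeV d).powersetCard r | ¬ IsDeep (cubeV d) K S} : ℝ) ≤ N :=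
    mod_cast card_not_isDeep_le_card_sum_empiricalEntropy_lt hδ hd hr hK
  have hcheb : N * (δ * d) ^ 2 ≤ ((2 : ℝ) ^ r) ^ d * d :=
    card_sum_empiricalEntropy_lt_mul_sq_le hδ.le d r
  have hchoose : ((2 : ℝ) ^ r) ^ d ≤ 2 ^ r * r.factorial * (2 ^ d).choose r := by
    rw [pow_right_comm]
    exact mod_cast cast_pow_le_mul_choose hrd
  have hd' : (0 : ℝ) < d := mod_cast hd
  have hpos : (0 : ℝ) < (2 ^ d).choose r := mod_cast Nat.choose_pos (by lia)
  rw [div_div, div_le_div_iff₀ hpos (by positivity)]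
  calc (#{S ∈ (cubeV d).powersetCard r | ¬ IsDeep (cubeV d) K S} : ℝ) * (δ ^ 2 * d)
      ≤ N * (δ ^ 2 * d) := by gcongr
    _ ≤ (2 ^ r) ^ d := le_of_mul_le_mul_right (by linarith) hd'
    _ ≤ _ := hchoose

lemma tendsto_two_rpow_mul_natCast_sub_sq_atTop {β C : ℝ} (hβ : 0 < β) (hC : 0 < C) :
    Tendsto (fun d : ℕ => C * (2 : ℝ) ^ (β * d) - ((d : ℝ) + 2) ^ 2) atTop atTop := by
  have hbase : 1 < (2 : ℝ) ^ β := Real.one_lt_rpow one_lt_two hβ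
  have hpoly : (fun d : ℕ => ((d : ℝ) + 2) ^ 2 + d) =o[atTop] fun d : ℕ => ((2 : ℝ) ^ β) ^ d := by
    have h1 := isLittleO_pow_const_const_pow_of_one_lt (R := ℝ) 1 hbase
    have h2 := isLittleO_pow_const_const_pow_of_one_lt (R := ℝ) 2 hbase
    have h0 := isLittleO_pow_const_const_pow_of_one_lt (R := ℝ) 0 hbase
    refine ((h2.add (h1.const_mul_left 5)).add (h0.const_mul_left 4)).congr_left fun d => ?_
    ring
  refine tendsto_atTop_mono' _ ?_ (tendsto_natCast_atTop_atTop (R := ℝ))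
  filter_upwards [hpoly.bound hC] with d hd
  rw [Real.norm_of_nonneg (by positivity), Real.norm_of_nonneg (by positivity),
    ← Real.rpow_mul_natCast two_pos.le] at hd
  linarith

open scoped Classical in
lemma tendsto_card_not_isDeep_div_choose {r : ℕ} [NeZero r] {c : ℝ} (hc : 0 ≤ c)
    (hcr : c < meanEntropy r) :
    Tendsto (fun d : ℕ => (#{S ∈ (cubeV d).powersetCard r | ¬ IsDeep (cubeV d) (2 ^ (c * d)) S} : ℝ)
      / (2 ^ d).choose r) atTop (nhds 0) := by
  set δ := (meanEntropy r - c) / 4 with hδ_def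
  have hδ : 0 < δ := by linarith
  have hr0 : (0 : ℝ) < r := mod_cast Nat.pos_of_neZero r
  refine squeeze_zero' (Eventually.of_forall fun d => by positivity) ?_
    (tendsto_const_div_atTop_nhds_zero_nat (2 ^ r * r.factorial / δ ^ 2))
  filter_upwards [eventually_gt_atTop 0, eventually_ge_atTop (2 * r),
    tendsto_natCast_atTop_atTop.eventually_ge_atTop (2 * (r : ℝ) ^ 3 / δ ^ 2),
    (tendsto_two_rpow_mul_natCast_sub_sq_atTop (by positivity : 0 < 2 * δ)
      one_pos).eventually_ge_atTop (2 * r * (1 + 2 ^ 2 ^ r))] with d hd hrd hr hgrowth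
  refine card_not_isDeep_div_choose_le hδ hd hr (hrd.trans Nat.lt_two_pow_self.le) ?_
  have hone : (1 : ℝ) ≤ 2 ^ (c * d) := Real.one_le_rpow one_le_two (by positivity)
  have hsplit : (2 : ℝ) ^ ((meanEntropy r - δ - δ) * d) = 2 ^ (c * d) * 2 ^ (2 * δ * d) := by
    rw [← Real.rpow_add two_pos]
    congr 1
    rw [hδ_def]
    ring
  rw [hsplit, le_div_iff₀ (by positivity)]
  calc ((2 : ℝ) ^ (c * d) + 2 ^ 2 ^ r) * (2 * r)
      ≤ (2 ^ (c * d) + 2 ^ (c * d) * 2 ^ 2 ^ r) * (2 * r) := by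
        gcongr
        exact le_mul_of_one_le_left (by positivity) hone
    _ = (2 : ℝ) ^ (c * d) * (2 * r * (1 + 2 ^ 2 ^ r)) := by ring
    _ ≤ 2 ^ (c * d) * 2 ^ (2 * δ * d) := by
        gcongr
        nlinarith

lemma sum_range_choose_two_pow_le_exp (d : ℕ) :
    ((∑ j ∈ range (d + 2), (2 ^ d).choose j : ℕ) : ℝ) ≤ Real.exp (((d : ℝ) + 2) ^ 2) := by
  have hterm : ∀ j ∈ range (d + 2), (2 ^ d).choose j ≤ (2 ^ d) ^ (d + 1) := fun j hj =>
    (Nat.choose_le_pow _ _).trans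
      (Nat.pow_le_pow_right (by positivity) (Nat.lt_succ_iff.1 (mem_range.1 hj)))
  have hsum : ((∑ j ∈ range (d + 2), (2 ^ d).choose j : ℕ) : ℝ) ≤ (d + 2) * (2 ^ d) ^ (d + 1) := by
    have h := sum_le_card_nsmul _ _ _ hterm
    rw [card_range, smul_eq_mul] at h
    exact mod_cast h
  have htwo : (2 : ℝ) ≤ Real.exp 1 := by linarith [Real.add_one_le_exp (1 : ℝ)]
  have hlinear : (d : ℝ) + 2 ≤ Real.exp (d + 2) := by linarith [Real.add_one_le_exp ((d : ℝ) + 2)]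
  calc _ ≤ ((d : ℝ) + 2) * (2 ^ d) ^ (d + 1) := hsum
    _ ≤ Real.exp (d + 2) * (Real.exp 1 ^ d) ^ (d + 1) := by gcongr
    _ = Real.exp (d + 2 + d * (d + 1)) := by
        rw [← pow_mul, ← Real.exp_nat_mul, ← Real.exp_add]
        push_cast
        ring_nf
    _ ≤ Real.exp ((d + 2) ^ 2) := Real.exp_le_exp.2 (by nlinarith [d.cast_nonneg (α := ℝ)])

lemma half_mul_div_le_mul_sub_div_sub {K : ℝ} (hK : 0 ≤ K) {n N r : ℕ} (hn : 2 * r ≤ n)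
    (hN : r < N) : 1 / 2 * (K * n / N) ≤ K * (n - r : ℕ) / (N - r : ℕ) := by
  have hhalf : (n : ℝ) ≤ 2 * (n - r : ℕ) := mod_cast (by lia : n ≤ 2 * (n - r))
  have hpos : (0 : ℝ) < (N - r : ℕ) := mod_cast Nat.sub_pos_of_lt hN
  calc 1 / 2 * (K * n / N) ≤ 1 / 2 * (K * (2 * (n - r : ℕ)) / (N - r : ℕ)) := by
        gcongr
        exact Nat.sub_le N r
    _ = K * (n - r : ℕ) / (N - r : ℕ) := by ring

lemma tendsto_sum_choose_mul_exp_neg {c α : ℝ} (hα : 0 < α) (hcα : 1 < c + α) {n : ℕ → ℕ}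
    (hn : ∀ d : ℕ, (2 : ℝ) ^ (α * d) ≤ n d) (r : ℕ) :
    Tendsto (fun d : ℕ => ((∑ j ∈ range (d + 2), (2 ^ d).choose j : ℕ) : ℝ) *
      Real.exp (-(2 ^ (c * d) * (n d - r : ℕ) / (2 ^ d - r : ℕ)))) atTop (nhds 0) := by
  have hlim := tendsto_two_rpow_mul_natCast_sub_sq_atTop (by linarith : 0 < c + α - 1) one_half_pos
  refine squeeze_zero' (Eventually.of_forall fun d => by positivity) ?_
    (Real.tendsto_exp_neg_atTop_nhds_zero.comp hlim)
  filter_upwards [eventually_ge_atTop r,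
    (tendsto_two_rpow_mul_natCast_sub_sq_atTop hα one_pos).eventually_ge_atTop (2 * r : ℝ)]
    with d hrd hgrowth
  have h2r : 2 * r ≤ n d := by
    have : (2 * r : ℝ) ≤ n d := by linarith [hn d, sq_nonneg ((d : ℝ) + 2)]
    exact_mod_cast this
  have hexponent : 1 / 2 * 2 ^ ((c + α - 1) * d)
      ≤ (2 : ℝ) ^ (c * d) * (n d - r : ℕ) / (2 ^ d - r : ℕ) := by
    calc 1 / 2 * (2 : ℝ) ^ ((c + α - 1) * d)
        = 1 / 2 * (2 ^ (c * d) * 2 ^ (α * d) / (2 ^ d : ℕ)) := by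
          rw [Nat.cast_pow, Nat.cast_two, ← Real.rpow_natCast, ← Real.rpow_add two_pos,
            ← Real.rpow_sub two_pos]
          ring_nf
      _ ≤ 1 / 2 * (2 ^ (c * d) * n d / (2 ^ d : ℕ)) := by
          gcongr
          exact hn d
      _ ≤ _ := half_mul_div_le_mul_sub_div_sub (by positivity) h2r
          (hrd.trans_lt Nat.lt_two_pow_self)
  calc _ ≤ Real.exp (((d : ℝ) + 2) ^ 2) * Real.exp (-(1 / 2 * 2 ^ ((c + α - 1) * d))) := by
        gcongr
        exact sum_range_choose_two_pow_le_exp d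
    _ = Real.exp (-(1 / 2 * 2 ^ ((c + α - 1) * d) - ((d : ℝ) + 2) ^ 2)) := by
        rw [← Real.exp_add]
        ring_nf

end Asymptotics

/-- Above the threshold `τ_k`, the expected `k`-face density of the convex hull of a
uniformly random `n(d)`-element subset of `{0,1}^d` tends to 0. -/
theorem stmt1 (k : ℕ) (hk : 1 ≤ k) (ε : ℝ) (hε : 0 < ε) (n : ℕ → ℕ)
    (hup : ∀ d, n d ≤ 2 ^ d)
    (hthr : ∀ d : ℕ, (2 : ℝ) ^ ((tau k + ε) * (d : ℝ)) ≤ (n d : ℝ)) :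
    Tendsto (fun d : ℕ =>
        (∑ W ∈ Finset.powersetCard (n d) (cubeV d), faceDensity k W) /
          ((Finset.powersetCard (n d) (cubeV d)).card : ℝ))
      atTop (nhds 0) := by
  classical
  have hτ : tau k = 1 - meanEntropy (k + 1) := tau_eq_one_sub_meanEntropy hk
  have hle_one : tau k + ε ≤ 1 := by
    have h : (2 : ℝ) ^ (tau k + ε) ≤ 2 ^ (1 : ℝ) := by
      simpa using (hthr 1).trans (Nat.cast_le.2 (hup 1))
    exact (Real.rpow_le_rpow_left_iff one_lt_two).1 h
  set c := meanEntropy (k + 1) - ε / 2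
  have hshallow := tendsto_card_not_isDeep_div_choose (r := k + 1) (c := c) (by grind) (by grind)
  have hmissed := tendsto_sum_choose_mul_exp_neg (c := c) (α := tau k + ε)
    (by linarith [meanEntropy_le_one (k + 1)]) (by grind) hthr (k + 1)
  simp_rw [← expect_eq_sum_div_card]
  refine squeeze_zero (fun d => expect_nonneg fun W _ => faceDensity_nonneg k W)
    (fun d => expect_faceDensity_le hk (cubeV d) (2 ^ (c * d)) (n d)) ?_
  simpa only [card_cubeV, add_zero] using hshallow.add hmissed
end

section
/- Let β, ε > 0. If ñ: ℕ → ℕ satisfies ñ(d) ≥ 2^{(1−β+ε)d} for all d, and for each d the points X₁,…,X_{ñ(d)} are chosen independently and uniformly at random from {0,1}^d, then the probability that {z ∈ (0,1)^d : H(z) ≥ β} ⊆ conv{X₁,…,X_{ñ(d)}} tends to 1 as d → ∞. -/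
open Filter
open scoped BigOperators

/-!
If `z` is not in the convex hull of the sample, then some closed half-space through `z` contains
none of the sample points. Every half-space `{x | a · z ≤ a · x}` through a point `z` with
`H(z) ≥ β` contains at least `2 ^ (β d - o(d))` vertices of the cube: group the coordinates into
boundedly many blocks on which `a` has constant sign and `z` is nearly constant. In a block of size
`n` with `z ≈ m / n`, there are `2 ^ (n h(m / n) - O(log n))` 0/1-vectors with `m` ones, and at
least one `n`-th of them satisfy the inequality restricted to the block, since its two sides agree
on average over cyclic shifts. So a fixed half-space is missed with probability at most
`exp (-2 ^ (ε d - o(d)))`, whereas by Radon's theorem and the Sauer–Shelah lemma half-spaces cut out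
only `exp (O(d ^ 2))` subsets of the cube, and a union bound concludes.
-/

open scoped Nat Finset

theorem eventually_mul_add_one_pow_le_exp (k : ℕ) {b C : ℝ} (hC : 0 < C) (hb : 0 < b) :
    ∀ᶠ x : ℝ in atTop, C * (x + 1) ^ k ≤ Real.exp (b * x) := by
  have shifted := (isLittleO_pow_exp_pos_mul_atTop k hb).comp_tendsto
    (tendsto_atTop_add_const_right atTop (1 : ℝ) tendsto_id)
  filter_upwards [shifted.bound (by positivity : 0 < Real.exp (-b) / C)] with x hx
  calc C * (x + 1) ^ k ≤ C * (Real.exp (-b) / C * Real.exp (b * (x + 1))) := by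
        gcongr
        exact (le_abs_self _).trans (hx.trans_eq (by simp))
    _ = Real.exp (b * x) := by
        rw [← mul_assoc, mul_div_cancel₀ _ hC.ne', ← Real.exp_add]
        ring_nf

theorem tendsto_exp_sq_sub_exp {b : ℝ} (hb : 0 < b) :
    Tendsto (fun d : ℕ => Real.exp (((d : ℝ) + 1) ^ 2 - Real.exp (b * d))) atTop (nhds 0) := by
  have exponent_le : ∀ᶠ d : ℕ in atTop, ((d : ℝ) + 1) ^ 2 - Real.exp (b * d) ≤ -d := by
    filter_upwards [tendsto_natCast_atTop_atTop.eventually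
      (eventually_mul_add_one_pow_le_exp 2 two_pos hb)] with d hd
    nlinarith
  exact Real.tendsto_exp_atBot.comp
    (tendsto_atBot_mono' _ exponent_le (tendsto_neg_atTop_atBot.comp tendsto_natCast_atTop_atTop))

section BinomialEntropy

theorem factorial_mul_pow_le_factorial_mul_pow (m j : ℕ) : m ! * m ^ j ≤ j ! * m ^ m := by
  rcases le_total j m with hjm | hmj
  · calc m ! * m ^ j = (m - (m - j))! * m.descFactorial (m - j) * m ^ j := by
          rw [Nat.factorial_mul_descFactorial (Nat.sub_le m j)]
      _ ≤ j ! * m ^ (m - j) * m ^ j := by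
          rw [Nat.sub_sub_self hjm]
          gcongr
          exact Nat.descFactorial_le_pow m (m - j)
      _ = j ! * m ^ m := by rw [mul_assoc, ← pow_add, Nat.sub_add_cancel hjm]
  · calc m ! * m ^ j = m ! * m ^ (j - m) * m ^ m := by
          rw [mul_assoc, ← pow_add, Nat.sub_add_cancel hmj]
      _ ≤ j ! * m ^ m := by
          gcongr
          exact Nat.factorial_mul_pow_sub_le_factorial hmj

variable {n m : ℕ}

theorem choose_mul_pow_mul_pow_le (hm : m ≤ n) {j : ℕ} (hj : j ≤ n) :
    n.choose j * (m ^ j * (n - m) ^ (n - j)) ≤ n.choose m * (m ^ m * (n - m) ^ (n - m)) := by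
  have hpos : 0 < j ! * (n - j)! * (m ! * (n - m)!) := by positivity
  refine le_of_mul_le_mul_left ?_ hpos
  calc j ! * (n - j)! * (m ! * (n - m)!) * (n.choose j * (m ^ j * (n - m) ^ (n - j)))
      = n.choose j * j ! * (n - j)! * (m ! * m ^ j * ((n - m)! * (n - m) ^ (n - j))) := by ring
    _ ≤ n ! * (j ! * m ^ m * ((n - j)! * (n - m) ^ (n - m))) := by
        rw [Nat.choose_mul_factorial_mul_factorial hj]
        gcongr n ! * (?_ * ?_) <;> exact factorial_mul_pow_le_factorial_mul_pow _ _
    _ = j ! * (n - j)! * (m ! * (n - m)!) * (n.choose m * (m ^ m * (n - m) ^ (n - m))) := by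
        rw [← Nat.choose_mul_factorial_mul_factorial hm]
        ring

/-- The mode of the binomial distribution with parameters `n` and `m / n` is `m`, so it carries at
least the average mass `1 / (n + 1)`. -/
theorem pow_self_le_succ_mul_choose_mul (hm : m ≤ n) :
    n ^ n ≤ (n + 1) * (n.choose m * (m ^ m * (n - m) ^ (n - m))) := by
  calc n ^ n = ∑ j ∈ Finset.range (n + 1), n.choose j * (m ^ j * (n - m) ^ (n - j)) := by
        conv_lhs => rw [← Nat.add_sub_of_le hm, add_pow, Nat.add_sub_of_le hm]
        exact Finset.sum_congr rfl fun j _ => mul_comm _ _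
    _ ≤ #(Finset.range (n + 1)) • (n.choose m * (m ^ m * (n - m) ^ (n - m))) :=
        Finset.sum_le_card_nsmul _ _ _ fun j hj =>
          choose_mul_pow_mul_pow_le hm (Finset.mem_range_succ_iff.1 hj)
    _ = (n + 1) * (n.choose m * (m ^ m * (n - m) ^ (n - m))) := by
        rw [Finset.card_range, smul_eq_mul]

theorem exp_mul_log_self (k : ℕ) : Real.exp (k * Real.log k) = (k : ℝ) ^ k := by
  rcases k.eq_zero_or_pos with rfl | hk
  · simp
  · rw [Real.exp_nat_mul, Real.exp_log (by exact_mod_cast hk)]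

theorem mul_binEntropy_div (hm : m ≤ n) :
    n * Real.binEntropy (m / n) =
      n * Real.log n - (m * Real.log m + (n - m : ℕ) * Real.log (n - m : ℕ)) := by
  rcases n.eq_zero_or_pos with rfl | hn
  · simp [Nat.le_zero.1 hm]
  have hn0 : (n : ℝ) ≠ 0 := by exact_mod_cast hn.ne'
  have mul_negMulLog_div (k : ℕ) :
      n * Real.negMulLog (k / n) = k * Real.log n - k * Real.log k := by
    rcases k.eq_zero_or_pos with rfl | hk
    · simp
    · rw [Real.negMulLog, Real.log_div (by exact_mod_cast hk.ne') hn0]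
      field_simp
      ring
  have hsub : 1 - (m : ℝ) / n = (n - m : ℕ) / n := by
    rw [Nat.cast_sub hm]
    field_simp
  rw [Real.binEntropy_eq_negMulLog_add_negMulLog_one_sub, hsub, mul_add, mul_negMulLog_div,
    mul_negMulLog_div, Nat.cast_sub hm]
  ring

theorem exp_mul_binEntropy_div_le (hm : m ≤ n) :
    Real.exp (n * Real.binEntropy (m / n)) ≤ (n + 1) * n.choose m := by
  rw [mul_binEntropy_div hm, Real.exp_sub, Real.exp_add, exp_mul_log_self, exp_mul_log_self,
    exp_mul_log_self, div_le_iff₀ (by rw [← exp_mul_log_self, ← exp_mul_log_self]; positivity),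
    mul_assoc]
  exact_mod_cast pow_self_le_succ_mul_choose_mul hm

end BinomialEntropy

section EntropyModulus

/-- A modulus of continuity of the binary entropy on `[0, 1]` at scale `1 / r`, for points known
only up to a further rounding error `1 / n`: for `n < r` the slack `r / n` makes it vacuous. -/
def IsEntropyModulus (δ : ℝ) (r : ℕ) : Prop :=
  ∀ n : ℕ, 0 < n → ∀ p ∈ Set.Icc (0 : ℝ) 1, ∀ q ∈ Set.Icc (0 : ℝ) 1,
    |p - q| ≤ 1 / r + 1 / n → Real.binEntropy p ≤ Real.binEntropy q + δ + r / n

theorem exists_isEntropyModulus {δ : ℝ} (hδ : 0 < δ) : ∃ r : ℕ, 0 < r ∧ IsEntropyModulus δ r := by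
  obtain ⟨η, hη, modulus⟩ := Metric.uniformContinuousOn_iff.1
    (isCompact_Icc.uniformContinuousOn_of_continuous
      Real.binEntropy_continuous.continuousOn : UniformContinuousOn _ (Set.Icc (0 : ℝ) 1)) δ hδ
  obtain ⟨r, hr⟩ := exists_nat_gt (2 / η)
  have hr0 : (0 : ℝ) < r := (by positivity : 0 < 2 / η).trans hr
  refine ⟨r, by exact_mod_cast hr0, fun n hn p hp q hq hpq => ?_⟩
  have hn0 : (0 : ℝ) < n := by exact_mod_cast hn
  rcases le_or_gt r n with hrn | hnr
  · have dist_lt : dist p q < η :=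
      calc |p - q| ≤ 1 / r + 1 / n := hpq
        _ ≤ 1 / r + 1 / r := by gcongr
        _ = 2 / r := by ring
        _ < η := by rwa [div_lt_comm₀ hr0 hη]
    have entropy_lt := (abs_lt.1 (modulus p hp q hq dist_lt)).2
    have : (0 : ℝ) ≤ r / n := by positivity
    linarith
  · have one_le : (1 : ℝ) ≤ r / n := (one_le_div hn0).2 (by exact_mod_cast hnr.le)
    have entropy_le_one : Real.binEntropy p ≤ 1 :=
      Real.binEntropy_le_log_two.trans (by linarith [Real.log_two_lt_d9])
    linarith [Real.binEntropy_nonneg hq.1 hq.2]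

end EntropyModulus

theorem exists_nat_mul_le_mul_div {ι : Type*} {a z : ι → ℝ} {l u : ℝ} {n : ℕ} (hn : 0 < n)
    (ha : (∀ i, 0 ≤ a i) ∨ ∀ i, a i ≤ 0) (hl : l ∈ Set.Icc (0 : ℝ) 1) (hu : u ∈ Set.Icc (0 : ℝ) 1)
    (hz : ∀ i, z i ∈ Set.Icc l u) :
    ∃ m ≤ n, ∀ i, a i * z i ≤ a i * (m / n) ∧ |z i - m / n| ≤ u - l + 1 / n := by
  have hn0 : (0 : ℝ) < n := by exact_mod_cast hn
  rcases ha with ha | ha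
  · have le_div : u ≤ ⌈u * n⌉₊ / n := (le_div_iff₀ hn0).2 (Nat.le_ceil _)
    have div_le : ⌈u * n⌉₊ / n ≤ u + 1 / n := by
      rw [div_le_iff₀ hn0, add_mul, one_div_mul_cancel hn0.ne']
      exact (Nat.ceil_lt_add_one (mul_nonneg hu.1 hn0.le)).le
    refine ⟨⌈u * n⌉₊, Nat.ceil_le.2 (mul_le_of_le_one_left hn0.le hu.2), fun i => ⟨?_, ?_⟩⟩
    · exact mul_le_mul_of_nonneg_left ((hz i).2.trans le_div) (ha i)
    · rw [abs_sub_comm, abs_of_nonneg] <;> linarith [(hz i).1, (hz i).2]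
  · have div_le : ⌊l * n⌋₊ / n ≤ l := (div_le_iff₀ hn0).2 (Nat.floor_le (mul_nonneg hl.1 hn0.le))
    have le_div : l - 1 / n ≤ ⌊l * n⌋₊ / n := by
      rw [le_div_iff₀ hn0, sub_mul, one_div_mul_cancel hn0.ne']
      exact (Nat.sub_one_lt_floor _).le
    refine ⟨⌊l * n⌋₊, Nat.floor_le_of_le (mul_le_of_le_one_left hn0.le hl.2), fun i => ⟨?_, ?_⟩⟩
    · exact mul_le_mul_of_nonpos_left (div_le.trans (hz i).1) (ha i)
    · rw [abs_of_nonneg] <;> linarith [(hz i).1, (hz i).2]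

section CubeHalfspace

variable {ι : Type*} [Fintype ι] [DecidableEq ι]

/-- The vertices `x` of the cube `{0,1}^ι`, encoded as Boolean vectors, in the closed half-space
`c ≤ ∑ i, a i * x i`. -/
noncomputable def cubeHalfspace (a : ι → ℝ) (c : ℝ) : Finset (ι → Bool) :=
  {x | c ≤ ∑ i with x i, a i}

theorem mem_cubeHalfspace {a : ι → ℝ} {c : ℝ} {x : ι → Bool} :
    x ∈ cubeHalfspace a c ↔ c ≤ ∑ i with x i, a i := by
  simp [cubeHalfspace]

theorem cubeHalfspace_anti (a : ι → ℝ) {c c' : ℝ} (h : c ≤ c') :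
    cubeHalfspace a c' ⊆ cubeHalfspace a c := fun _ hx =>
  mem_cubeHalfspace.2 (h.trans (mem_cubeHalfspace.1 hx))

theorem card_filter_card_eq_choose (m : ℕ) :
    #{x : ι → Bool | #{i | x i} = m} = (Fintype.card ι).choose m := by
  rw [← Finset.card_univ, ← Finset.card_powersetCard]
  refine Finset.card_nbij' (fun x => ({i | x i} : Finset ι)) (fun s i => decide (i ∈ s))
    ?_ ?_ ?_ ?_
  · intro x hx
    simpa using hx
  · intro s hs
    simpa using hs
  · intro x _
    simp
  · intro s _
    simp

theorem sum_sum_filter_add {G : Type*} [AddGroup G] [Fintype G] (a : G → ℝ) (x : G → Bool) :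
    ∑ g, ∑ i with x (i + g), a i = #{i | x i} * ∑ i, a i := by
  have sum_shifts (i : G) : (∑ g, if x (i + g) then a i else 0) = #{j | x j} * a i := by
    calc (∑ g, if x (i + g) then a i else 0) = ∑ j, if x j then a i else 0 :=
          Equiv.sum_comp (Equiv.addLeft i) fun j => if x j then a i else 0
      _ = #{j | x j} * a i := by rw [← Finset.sum_filter, Finset.sum_const, nsmul_eq_mul]
  simp only [Finset.sum_filter]
  rw [Finset.sum_comm, Finset.mul_sum]
  exact Finset.sum_congr rfl fun i _ => sum_shifts i

theorem exists_shift_mem_cubeHalfspace {G : Type*} [AddGroup G] [Fintype G] [DecidableEq G]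
    (a : G → ℝ) (x : G → Bool) :
    ∃ g, (fun i => x (i + g)) ∈ cubeHalfspace a (#{i | x i} / Fintype.card G * ∑ i, a i) := by
  simp only [mem_cubeHalfspace]
  obtain ⟨g, -, hg⟩ := Finset.exists_le_of_sum_le (s := (Finset.univ : Finset G))
    (f := fun _ => #{i | x i} / Fintype.card G * ∑ i, a i) (g := fun g => ∑ i with x (i + g), a i)
    Finset.univ_nonempty (by
      rw [sum_sum_filter_add, Finset.sum_const, Finset.card_univ, nsmul_eq_mul]
      field_simp
      exact le_rfl)
  exact ⟨g, hg⟩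

/-- A cyclic group of order `card ι` acts on the 0/1-vectors with `m` ones, and every orbit meets
the half-space because the mean of a linear functional over an orbit is its value at the constant
vector `m / card ι`. -/
theorem choose_le_card_mul_card_cubeHalfspace [Nonempty ι] (a : ι → ℝ) (m : ℕ) :
    (Fintype.card ι).choose m ≤
      Fintype.card ι * #(cubeHalfspace a (m / Fintype.card ι * ∑ i, a i)) := by
  let : AddCommGroup ι := (Fintype.equivFin ι).addCommGroup
  set T := cubeHalfspace a (m / Fintype.card ι * ∑ i, a i)
  have cover : ({x : ι → Bool | #{i | x i} = m} : Finset _) ⊆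
      Finset.univ.biUnion fun g : ι => T.image fun y i => y (i - g) := by
    intro x hx
    obtain rfl : #{i | x i} = m := (Finset.mem_filter.1 hx).2
    obtain ⟨g, hg⟩ := exists_shift_mem_cubeHalfspace a x
    exact Finset.mem_biUnion.2
      ⟨g, Finset.mem_univ g, Finset.mem_image.2 ⟨_, hg, by simp only [sub_add_cancel]⟩⟩
  rw [← card_filter_card_eq_choose]
  exact (Finset.card_le_card cover).trans
    (Finset.card_biUnion_le_card_mul _ _ _ fun _ _ => Finset.card_image_le)

theorem prod_card_cubeHalfspace_fiber_le {L : Type*} [Fintype L] [DecidableEq L] (κ : ι → L)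
    (a : ι → ℝ) (c : L → ℝ) :
    ∏ l, #(cubeHalfspace (fun i : {i // κ i = l} => a i) (c l)) ≤
      #(cubeHalfspace a (∑ l, c l)) := by
  rw [← Fintype.card_piFinset]
  refine Finset.card_le_card_of_injOn (fun y i => y (κ i) ⟨i, rfl⟩) ?_ ?_
  · intro y hy
    simp only [Finset.mem_coe, Fintype.mem_piFinset, mem_cubeHalfspace, Finset.sum_filter] at hy ⊢
    rw [← Fintype.sum_fiberwise κ]
    refine Finset.sum_le_sum fun l _ => (hy l).trans_eq (Finset.sum_congr rfl ?_)
    rintro ⟨i, rfl⟩ -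
    rfl
  · intro y _ y' _ h
    funext l ⟨i, hi⟩
    subst hi
    exact congrFun h i

theorem exp_mul_binEntropy_div_le_mul_card_cubeHalfspace {a z : ι → ℝ} {m : ℕ}
    (hm : m ≤ Fintype.card ι) (hz : ∀ i, a i * z i ≤ a i * (m / Fintype.card ι)) :
    Real.exp (Fintype.card ι * Real.binEntropy (m / Fintype.card ι)) ≤
      (Fintype.card ι + 1) ^ 2 * #(cubeHalfspace a (∑ i, a i * z i)) := by
  rcases isEmpty_or_nonempty ι with hι | hι
  · simp [cubeHalfspace]
  have target_le : ∑ i, a i * z i ≤ m / Fintype.card ι * ∑ i, a i := by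
    rw [mul_comm, Finset.sum_mul]
    exact Finset.sum_le_sum fun i _ => hz i
  have choose_le : ((Fintype.card ι).choose m : ℝ) ≤
      Fintype.card ι * #(cubeHalfspace a (∑ i, a i * z i)) := by
    exact_mod_cast (choose_le_card_mul_card_cubeHalfspace a m).trans
      (Nat.mul_le_mul_left _ (Finset.card_le_card (cubeHalfspace_anti a target_le)))
  calc Real.exp (Fintype.card ι * Real.binEntropy (m / Fintype.card ι))
      ≤ (Fintype.card ι + 1) * (Fintype.card ι).choose m := exp_mul_binEntropy_div_le hm
    _ ≤ (Fintype.card ι + 1) * ((Fintype.card ι + 1) * #(cubeHalfspace a (∑ i, a i * z i))) := by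
        gcongr
        refine choose_le.trans ?_
        gcongr
        exact le_add_of_nonneg_right zero_le_one
    _ = (Fintype.card ι + 1) ^ 2 * #(cubeHalfspace a (∑ i, a i * z i)) := by ring

variable {δ : ℝ} {r : ℕ} {a z : ι → ℝ}

theorem exp_sum_binEntropy_sub_le_of_mem_Icc (hr : IsEntropyModulus δ r) {l u : ℝ}
    (hl : l ∈ Set.Icc (0 : ℝ) 1) (hu : u ∈ Set.Icc (0 : ℝ) 1) (hlu : u - l ≤ 1 / r)
    (ha : (∀ i, 0 ≤ a i) ∨ ∀ i, a i ≤ 0) (hz : ∀ i, z i ∈ Set.Icc l u) :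
    Real.exp (∑ i, Real.binEntropy (z i) - δ * Fintype.card ι - r) ≤
      (Fintype.card ι + 1) ^ 2 * #(cubeHalfspace a (∑ i, a i * z i)) := by
  rcases isEmpty_or_nonempty ι with hι | hι
  · simp [cubeHalfspace]
  obtain ⟨m, hm, rounding⟩ := exists_nat_mul_le_mul_div (Fintype.card_pos (α := ι)) ha hl hu hz
  refine le_trans (Real.exp_le_exp.2 ?_)
    (exp_mul_binEntropy_div_le_mul_card_cubeHalfspace hm fun i => (rounding i).1)
  set n := Fintype.card ι
  have hn : 0 < n := Fintype.card_pos
  have entropy_le (i : ι) : Real.binEntropy (z i) ≤ Real.binEntropy (m / n) + δ + r / n :=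
    hr n hn _ ⟨hl.1.trans (hz i).1, (hz i).2.trans hu.2⟩ _
      ⟨by positivity, div_le_one_of_le₀ (by exact_mod_cast hm) (by positivity)⟩
      ((rounding i).2.trans (by gcongr))
  have sum_entropy_le := Finset.sum_le_card_nsmul Finset.univ _ _ fun i _ => entropy_le i
  have slack : (n : ℝ) * (r / n) = r := mul_div_cancel₀ _ (by exact_mod_cast hn.ne')
  rw [Finset.card_univ, nsmul_eq_mul, mul_add, mul_add, slack] at sum_entropy_le
  linarith

theorem exp_sum_binEntropy_sub_le_of_blocks {L : Type*} [Fintype L] (κ : ι → L)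
    (hr : IsEntropyModulus δ r) {lo hi : L → ℝ} (hlo : ∀ l, lo l ∈ Set.Icc (0 : ℝ) 1)
    (hhi : ∀ l, hi l ∈ Set.Icc (0 : ℝ) 1) (hlohi : ∀ l, hi l - lo l ≤ 1 / r)
    (ha : ∀ l, (∀ i, κ i = l → 0 ≤ a i) ∨ ∀ i, κ i = l → a i ≤ 0)
    (hz : ∀ i, z i ∈ Set.Icc (lo (κ i)) (hi (κ i))) :
    Real.exp (∑ i, Real.binEntropy (z i) - δ * Fintype.card ι - Fintype.card L * r) ≤
      ((Fintype.card ι + 1) ^ 2) ^ Fintype.card L * #(cubeHalfspace a (∑ i, a i * z i)) := by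
  classical
  let w (l : L) : ℝ :=
    ∑ i : {i // κ i = l}, Real.binEntropy (z i) - δ * Fintype.card {i // κ i = l} - r
  let N (l : L) : ℕ :=
    #(cubeHalfspace (fun i : {i // κ i = l} => a i) (∑ i : {i // κ i = l}, a i * z i))
  have block (l : L) : Real.exp (w l) ≤ (Fintype.card ι + 1) ^ 2 * N l := by
    refine (exp_sum_binEntropy_sub_le_of_mem_Icc (a := fun i : {i // κ i = l} => a i) hr
      (hlo l) (hhi l) (hlohi l) ?_ ?_).trans ?_
    · exact (ha l).imp (fun h i => h i i.2) fun h i => h i i.2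
    · rintro ⟨i, rfl⟩
      exact hz i
    · gcongr
      exact Fintype.card_subtype_le _
  have sum_w :
      ∑ l, w l = ∑ i, Real.binEntropy (z i) - δ * Fintype.card ι - Fintype.card L * r := by
    have card_fibers : ∑ l, (Fintype.card {i // κ i = l} : ℝ) = Fintype.card ι := by
      simpa using Fintype.sum_fiberwise κ fun _ => (1 : ℝ)
    simp only [w, Finset.sum_sub_distrib, ← Finset.mul_sum, card_fibers, Finset.sum_const,
      Finset.card_univ, nsmul_eq_mul, Fintype.sum_fiberwise κ fun i => Real.binEntropy (z i)]
  have prod_N_le : ∏ l, (N l : ℝ) ≤ #(cubeHalfspace a (∑ i, a i * z i)) := by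
    rw [← Fintype.sum_fiberwise κ fun i => a i * z i]
    exact_mod_cast prod_card_cubeHalfspace_fiber_le κ a _
  calc Real.exp (∑ i, Real.binEntropy (z i) - δ * Fintype.card ι - Fintype.card L * r)
      = ∏ l, Real.exp (w l) := by rw [← sum_w, Real.exp_sum]
    _ ≤ ∏ l, ((Fintype.card ι + 1) ^ 2 * (N l : ℝ)) :=
        Finset.prod_le_prod (fun _ _ => (Real.exp_pos _).le) fun l _ => block l
    _ = ((Fintype.card ι + 1) ^ 2) ^ Fintype.card L * ∏ l, (N l : ℝ) := by
        rw [Finset.prod_mul_distrib, Finset.prod_const, Finset.card_univ]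
    _ ≤ ((Fintype.card ι + 1) ^ 2) ^ Fintype.card L * #(cubeHalfspace a (∑ i, a i * z i)) := by
        gcongr

theorem exp_sum_binEntropy_sub_le (hr : IsEntropyModulus δ r) (hr0 : 0 < r) (a : ι → ℝ)
    (hz : ∀ i, z i ∈ Set.Ico (0 : ℝ) 1) :
    Real.exp (∑ i, Real.binEntropy (z i) - δ * Fintype.card ι - 2 * r * r) ≤
      (Fintype.card ι + 1) ^ (4 * r) * #(cubeHalfspace a (∑ i, a i * z i)) := by
  have hr0' : (0 : ℝ) < r := by exact_mod_cast hr0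
  have scaled_nonneg (i : ι) : 0 ≤ z i * r := mul_nonneg (hz i).1 hr0'.le
  have floor_lt (i : ι) : ⌊z i * r⌋₊ < r :=
    (Nat.floor_lt (scaled_nonneg i)).2 (mul_lt_of_lt_one_left hr0' (hz i).2)
  have bounds := exp_sum_binEntropy_sub_le_of_blocks (a := a) (z := z)
    (fun i => ((decide (0 ≤ a i), ⟨⌊z i * r⌋₊, floor_lt i⟩) : Bool × Fin r)) hr
    (lo := fun l => l.2 / r) (hi := fun l => (l.2 + 1) / r) ?_ ?_ ?_ ?_ ?_
  · have card_labels : Fintype.card (Bool × Fin r) = 2 * r := by simp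
    rw [card_labels, ← pow_mul, ← mul_assoc] at bounds
    exact_mod_cast bounds
  · rintro ⟨-, k⟩
    exact ⟨by positivity, (div_le_one hr0').2 (by exact_mod_cast k.2.le)⟩
  · rintro ⟨-, k⟩
    exact ⟨by positivity, (div_le_one hr0').2 (by exact_mod_cast k.2)⟩
  · rintro ⟨-, k⟩
    exact (by ring : ((k : ℝ) + 1) / r - k / r = 1 / r).le
  · rintro ⟨_ | _, k⟩
    · exact Or.inr fun i hi => (by simpa using congrArg Prod.fst hi : a i < 0).le
    · exact Or.inl fun i hi => by simpa using congrArg Prod.fst hi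
  · intro i
    exact ⟨(div_le_iff₀ hr0').2 (Nat.floor_le (scaled_nonneg i)),
      (le_div_iff₀ hr0').2 (Nat.lt_floor_add_one _).le⟩

theorem eventually_exp_sum_binEntropy_sub_le {e : ℝ} (he : 0 < e) :
    ∀ᶠ d : ℕ in atTop, ∀ a z : Fin d → ℝ, (∀ i, z i ∈ Set.Ico (0 : ℝ) 1) →
      Real.exp (∑ i, Real.binEntropy (z i) - e * d) ≤ #(cubeHalfspace a (∑ i, a i * z i)) := by
  obtain ⟨r, hr0, hr⟩ := exists_isEntropyModulus (half_pos he)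
  have poly_le_exp := tendsto_natCast_atTop_atTop.eventually
    (eventually_mul_add_one_pow_le_exp (4 * r) (Real.exp_pos (2 * r * r)) (half_pos he))
  filter_upwards [poly_le_exp] with d hd a z hz
  have key := exp_sum_binEntropy_sub_le hr hr0 a hz
  rw [Fintype.card_fin] at key
  refine le_of_mul_le_mul_left ?_ (by positivity : (0 : ℝ) < (d + 1) ^ (4 * r))
  refine le_trans ?_ key
  calc (d + 1 : ℝ) ^ (4 * r) * Real.exp (∑ i, Real.binEntropy (z i) - e * d)
      = Real.exp (2 * r * r) * (d + 1 : ℝ) ^ (4 * r) *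
          Real.exp (∑ i, Real.binEntropy (z i) - e * d - 2 * r * r) := by
        rw [mul_comm (Real.exp (2 * r * r)), mul_assoc, ← Real.exp_add, add_sub_cancel]
    _ ≤ Real.exp (e / 2 * d) * Real.exp (∑ i, Real.binEntropy (z i) - e * d - 2 * r * r) := by
        gcongr
    _ = Real.exp (∑ i, Real.binEntropy (z i) - e / 2 * d - 2 * r * r) := by
        rw [← Real.exp_add]
        ring_nf

end CubeHalfspace

section HalfspaceSections

variable {α E : Type*} [Fintype α] [AddCommGroup E] [Module ℝ E]

open Classical in
/-- The subsets of a finite type cut out by the closed half-spaces of a real vector space, along a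
map `p` which places the elements of the type in the space. -/
noncomputable def halfspaceSections (p : α → E) : Finset (Finset α) :=
  {T | ∃ (f : Module.Dual ℝ E) (c : ℝ), ∀ x, x ∈ T ↔ c ≤ f (p x)}

theorem mem_halfspaceSections {p : α → E} {T : Finset α} :
    T ∈ halfspaceSections p ↔ ∃ (f : Module.Dual ℝ E) (c : ℝ), ∀ x, x ∈ T ↔ c ≤ f (p x) := by
  simp [halfspaceSections]

theorem exists_halfspace_iff_of_shatters [DecidableEq α] {p : α → E} {s : Finset α}
    (hs : (halfspaceSections p).Shatters s) (I : Set s) :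
    ∃ (f : Module.Dual ℝ E) (c : ℝ), ∀ x : s, x ∈ I ↔ c ≤ f (p x) := by
  classical
  obtain ⟨T, hT, hsT⟩ := hs (t := {x ∈ s | ∃ h : x ∈ s, ⟨x, h⟩ ∈ I}) (Finset.filter_subset _ _)
  obtain ⟨f, c, hfc⟩ := mem_halfspaceSections.1 hT
  refine ⟨f, c, fun x => ?_⟩
  rw [← hfc]
  simpa using (Finset.ext_iff.1 hsT x).symm

theorem affineIndependent_of_shatters [DecidableEq α] {p : α → E} {s : Finset α}
    (hs : (halfspaceSections p).Shatters s) : AffineIndependent ℝ fun x : s => p x := by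
  by_contra hdep
  obtain ⟨I, y, hyI, hyIc⟩ := Convex.radon_partition hdep
  obtain ⟨f, c, hfc⟩ := exists_halfspace_iff_of_shatters hs I
  have hull_subset : convexHull ℝ ((fun x : s => p x) '' I) ⊆ {v | c ≤ f v} :=
    convexHull_min (Set.image_subset_iff.2 fun x hx => (hfc x).1 hx)
      (convex_halfSpace_ge f.isLinear c)
  have hull_compl_subset : convexHull ℝ ((fun x : s => p x) '' Iᶜ) ⊆ {v | f v < c} :=
    convexHull_min (Set.image_subset_iff.2 fun x hx => not_le.1 (mt (hfc x).2 hx))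
      (convex_halfSpace_lt f.isLinear c)
  have le_apply : c ≤ f y := hull_subset hyI
  have apply_lt : f y < c := hull_compl_subset hyIc
  exact apply_lt.not_ge le_apply

theorem vcDim_halfspaceSections_le [DecidableEq α] [FiniteDimensional ℝ E] (p : α → E) :
    (halfspaceSections p).vcDim ≤ Module.finrank ℝ E + 1 := by
  refine Finset.sup_le fun s hs => ?_
  have card_le := (affineIndependent_of_shatters (Finset.mem_shatterer.1 hs)).card_le_finrank_succ
  rw [Fintype.card_coe] at card_le
  exact card_le.trans (Nat.succ_le_succ (Submodule.finrank_le _))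

theorem sum_choose_le_succ_pow (N D : ℕ) : ∑ k ∈ Finset.Iic D, N.choose k ≤ (N + 1) ^ D := by
  rw [add_pow, Nat.range_succ_eq_Iic]
  refine Finset.sum_le_sum fun k hk => (Nat.choose_le_pow N k).trans ?_
  rw [one_pow, mul_one]
  exact Nat.le_mul_of_pos_right _ (Nat.choose_pos (Finset.mem_Iic.1 hk))

theorem card_halfspaceSections_le [FiniteDimensional ℝ E] (p : α → E) :
    #(halfspaceSections p) ≤ (Fintype.card α + 1) ^ (Module.finrank ℝ E + 1) := by
  classical
  calc #(halfspaceSections p) ≤ #(halfspaceSections p).shatterer :=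
        Finset.card_le_card_shatterer _
    _ ≤ ∑ k ∈ Finset.Iic (halfspaceSections p).vcDim, (Fintype.card α).choose k :=
        Finset.card_shatterer_le_sum_vcDim
    _ ≤ (Fintype.card α + 1) ^ (halfspaceSections p).vcDim := sum_choose_le_succ_pow _ _
    _ ≤ (Fintype.card α + 1) ^ (Module.finrank ℝ E + 1) :=
        Nat.pow_le_pow_right (Nat.succ_pos _) (vcDim_halfspaceSections_le p)

end HalfspaceSections

section RandomPoints

theorem card_compl_pow_le {α : Type*} [Fintype α] [Nonempty α] [DecidableEq α] {T : Finset α}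
    {t : ℝ} (ht : t ≤ #T) (n : ℕ) :
    (#Tᶜ : ℝ) ^ n ≤ Fintype.card α ^ n * Real.exp (-(n * (t / Fintype.card α))) := by
  have card_compl_le : (#Tᶜ : ℝ) ≤ Fintype.card α * Real.exp (-(t / Fintype.card α)) :=
    calc (#Tᶜ : ℝ) = Fintype.card α - #T := by
          rw [Finset.card_compl, Nat.cast_sub (Finset.card_le_univ T)]
      _ ≤ Fintype.card α - t := by gcongr
      _ = Fintype.card α * (1 - t / Fintype.card α) := by field_simp
      _ ≤ Fintype.card α * Real.exp (-(t / Fintype.card α)) := by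
          gcongr
          exact Real.one_sub_le_exp_neg _
  calc (#Tᶜ : ℝ) ^ n ≤ (Fintype.card α * Real.exp (-(t / Fintype.card α))) ^ n := by gcongr
    _ = Fintype.card α ^ n * Real.exp (-(n * (t / Fintype.card α))) := by
        rw [mul_pow, ← Real.exp_nat_mul, mul_neg]

variable {κ α : Type*} [Fintype κ] [Fintype α] [Nonempty α]

theorem ncard_le_card_mul_card_pow_mul_exp (F : Finset (Finset α)) (t : ℝ) {bad : Set (κ → α)}
    (hbad : ∀ ω ∈ bad, ∃ T ∈ F, t ≤ #T ∧ ∀ k, ω k ∉ T) :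
    (bad.ncard : ℝ) ≤ #F * (Fintype.card α ^ Fintype.card κ *
      Real.exp (-(Fintype.card κ * (t / Fintype.card α)))) := by
  classical
  set n := Fintype.card κ
  set N := Fintype.card α
  have bad_subset :
      bad ⊆ ↑({T ∈ F | t ≤ #T}.biUnion fun T => Fintype.piFinset fun _ : κ => Tᶜ) := by
    intro ω hω
    obtain ⟨T, hTF, hT, hωT⟩ := hbad ω hω
    simp only [Finset.coe_biUnion, Set.mem_iUnion, Finset.mem_coe, Fintype.mem_piFinset,
      Finset.mem_compl]
    exact ⟨T, Finset.mem_filter.2 ⟨hTF, hT⟩, hωT⟩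
  have ncard_le_sum : bad.ncard ≤ ∑ T ∈ F with t ≤ #T, #Tᶜ ^ n := by
    refine ((Set.ncard_le_ncard bad_subset).trans_eq (Set.ncard_coe_finset _)).trans ?_
    refine Finset.card_biUnion_le.trans_eq (Finset.sum_congr rfl fun T _ => ?_)
    rw [Fintype.card_piFinset, Finset.prod_const, Finset.card_univ]
  calc (bad.ncard : ℝ) ≤ ∑ T ∈ F with t ≤ #T, (#Tᶜ : ℝ) ^ n := by exact_mod_cast ncard_le_sum
    _ ≤ ∑ T ∈ F with t ≤ #T, N ^ n * Real.exp (-(n * (t / N))) :=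
        Finset.sum_le_sum fun T hT => card_compl_pow_le (Finset.mem_filter.1 hT).2 n
    _ ≤ #F * (N ^ n * Real.exp (-(n * (t / N)))) := by
        rw [Finset.sum_const, nsmul_eq_mul]
        gcongr
        exact Finset.filter_subset _ _

theorem one_sub_card_mul_exp_le_ncard_div_card [DecidableEq κ] (F : Finset (Finset α)) (t : ℝ)
    {good : Set (κ → α)} (hgood : ∀ ω ∉ good, ∃ T ∈ F, t ≤ #T ∧ ∀ k, ω k ∉ T) :
    1 - #F * Real.exp (-(Fintype.card κ * (t / Fintype.card α))) ≤
      good.ncard / Fintype.card (κ → α) := by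
  have ncard_compl_le := ncard_le_card_mul_card_pow_mul_exp F t (bad := goodᶜ) hgood
  have ncard_add : (good.ncard : ℝ) + goodᶜ.ncard = Fintype.card α ^ Fintype.card κ := by
    have := Set.ncard_add_ncard_compl good
    rw [Nat.card_eq_fintype_card, Fintype.card_fun] at this
    exact_mod_cast this
  have total_pos : (0 : ℝ) < Fintype.card α ^ Fintype.card κ :=
    pow_pos (by exact_mod_cast Fintype.card_pos) _
  rw [Fintype.card_fun, Nat.cast_pow, le_div_iff₀ total_pos]
  linarith

theorem ncard_div_card_le_one {α : Type*} [Fintype α] (s : Set α) :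
    (s.ncard : ℝ) / Fintype.card α ≤ 1 := by
  rw [← Nat.card_eq_fintype_card]
  exact div_le_one_of_le₀ (by exact_mod_cast Set.ncard_le_card s) (Nat.cast_nonneg _)

variable {d : ℕ}

theorem sum_filter_eq_sum_mul_bv (a : Fin d → ℝ) (x : Fin d → Bool) :
    ∑ i with x i, a i = ∑ i, a i * bv x i := by
  simp [bv, Finset.sum_filter]

theorem cubeHalfspace_mem_halfspaceSections_bv (a : Fin d → ℝ) (c : ℝ) :
    cubeHalfspace a c ∈ halfspaceSections (bv (d := d)) := by
  refine mem_halfspaceSections.2 ⟨dotProductBilin ℝ ℝ a, c, fun x => ?_⟩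
  rw [mem_cubeHalfspace, sum_filter_eq_sum_mul_bv]
  rfl

theorem card_halfspaceSections_bv_le (d : ℕ) :
    #(halfspaceSections (bv (d := d))) ≤ Real.exp (((d : ℝ) + 1) ^ 2) := by
  have two_le_exp : (2 : ℝ) ≤ Real.exp 1 := by linarith [Real.add_one_le_exp 1]
  have pow_succ_le : (2 : ℝ) ^ d + 1 ≤ 2 ^ (d + 1) := by
    rw [pow_succ]
    linarith [one_le_pow₀ (one_le_two : (1 : ℝ) ≤ 2) (n := d)]
  have card_le := card_halfspaceSections_le (bv (d := d))
  rw [Fintype.card_fun, Fintype.card_bool, Fintype.card_fin, Module.finrank_fin_fun] at card_le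
  calc (#(halfspaceSections (bv (d := d))) : ℝ) ≤ (2 ^ d + 1) ^ (d + 1) := by exact_mod_cast card_le
    _ ≤ ((Real.exp 1) ^ (d + 1)) ^ (d + 1) := by
        gcongr
        exact pow_succ_le.trans (by gcongr)
    _ = Real.exp (((d : ℝ) + 1) ^ 2) := by
        rw [← pow_mul, ← Real.exp_nat_mul]
        push_cast
        ring_nf

theorem exists_forall_notMem_cubeHalfspace {κ : Type*} [Finite κ] {ω : κ → Fin d → Bool}
    {z : Fin d → ℝ} (hz : z ∉ convexHull ℝ (bv '' Set.range ω)) :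
    ∃ a : Fin d → ℝ, ∀ k, ω k ∉ cubeHalfspace a (∑ i, a i * z i) := by
  obtain ⟨f, u, f_lt, lt_f⟩ := geometric_hahn_banach_closed_point (convex_convexHull ℝ _)
    (((Set.finite_range ω).image bv).isClosed_convexHull ℝ) hz
  let a (i : Fin d) : ℝ := f (Pi.single i 1)
  have f_eq (v : Fin d → ℝ) : ∑ i, a i * v i = f v := by
    conv_rhs => rw [pi_eq_sum_univ' v, map_sum]
    simp only [a, map_smul, smul_eq_mul, mul_comm]
  refine ⟨a, fun k => ?_⟩
  rw [mem_cubeHalfspace, sum_filter_eq_sum_mul_bv, f_eq, f_eq, not_le]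
  exact (f_lt _ (subset_convexHull ℝ _ ⟨ω k, ⟨k, rfl⟩, rfl⟩)).trans lt_f

theorem one_sub_exp_le_ncard_subset_convexHull_div_card [DecidableEq κ]
    {Z : Set (Fin d → ℝ)} {t : ℝ}
    (ht : ∀ z ∈ Z, ∀ a : Fin d → ℝ, t ≤ #(cubeHalfspace a (∑ i, a i * z i))) :
    1 - Real.exp (((d : ℝ) + 1) ^ 2 - Fintype.card κ * (t / 2 ^ d)) ≤
      {ω : κ → Fin d → Bool | Z ⊆ convexHull ℝ (bv '' Set.range ω)}.ncard /
        Fintype.card (κ → Fin d → Bool) := by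
  refine le_trans ?_ (one_sub_card_mul_exp_le_ncard_div_card (halfspaceSections bv) t ?_)
  · have card_cube : (Fintype.card (Fin d → Bool) : ℝ) = 2 ^ d := by simp
    rw [card_cube, sub_eq_add_neg (((d : ℝ) + 1) ^ 2), Real.exp_add]
    gcongr
    exact card_halfspaceSections_bv_le d
  · intro ω hω
    obtain ⟨z, hzZ, hz⟩ := Set.not_subset.1 hω
    obtain ⟨a, ha⟩ := exists_forall_notMem_cubeHalfspace hz
    exact ⟨_, cubeHalfspace_mem_halfspaceSections_bv a _, ht z hzZ a, ha⟩

end RandomPoints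

theorem binEnt_eq_binEntropy_div_log_two (x : ℝ) : binEnt x = Real.binEntropy x / Real.log 2 := by
  rw [binEnt, Real.binEntropy, Real.logb, Real.logb]
  ring

theorem mul_log_two_le_sum_binEntropy {d : ℕ} (hd : 0 < d) {β : ℝ} {z : Fin d → ℝ}
    (hz : β ≤ 1 / (d : ℝ) * ∑ i, binEnt (z i)) :
    β * d * Real.log 2 ≤ ∑ i, Real.binEntropy (z i) := by
  have hd' : (0 : ℝ) < d := by exact_mod_cast hd
  have log_two_pos : 0 < Real.log 2 := Real.log_pos one_lt_two
  simp only [binEnt_eq_binEntropy_div_log_two, ← Finset.sum_div] at hz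
  rwa [← le_div_iff₀ log_two_pos, ← le_div_iff₀ hd', ← one_div_mul_eq_div (d : ℝ)]

theorem exp_half_le_mul_exp_div_two_pow {β ε x : ℝ} {d : ℕ}
    (hx : (2 : ℝ) ^ ((1 - β + ε) * d) ≤ x) :
    Real.exp (ε * Real.log 2 / 2 * d) ≤
      x * (Real.exp (β * d * Real.log 2 - ε * Real.log 2 / 2 * d) / 2 ^ d) :=
  calc Real.exp (ε * Real.log 2 / 2 * d)
      = 2 ^ ((1 - β + ε) * d) *
          (Real.exp (β * d * Real.log 2 - ε * Real.log 2 / 2 * d) / 2 ^ d) := by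
        rw [← Real.rpow_natCast 2 d, Real.rpow_def_of_pos two_pos, Real.rpow_def_of_pos two_pos,
          ← Real.exp_sub, ← Real.exp_add]
        ring_nf
    _ ≤ x * (Real.exp (β * d * Real.log 2 - ε * Real.log 2 / 2 * d) / 2 ^ d) := by gcongr

/-- If `ñ(d) ≥ 2^{(1-β+ε)d}` and `X₁,…,X_{ñ(d)}` are independent uniform points of
`{0,1}^d`, then with probability tending to 1 the region
`{z ∈ (0,1)^d : H(z) ≥ β}` is contained in their convex hull, where
`H(z) = (1/d) ∑ⱼ h(zⱼ)`. -/
theorem stmt9 (β ε : ℝ) (hβ : 0 < β) (hε : 0 < ε) (nt : ℕ → ℕ)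
    (hn : ∀ d : ℕ, (2 : ℝ) ^ ((1 - β + ε) * (d : ℝ)) ≤ (nt d : ℝ)) :
    Tendsto (fun d : ℕ =>
        (({ω : Fin (nt d) → Fin d → Bool |
              {z : Fin d → ℝ | (∀ i, z i ∈ Set.Ioo (0 : ℝ) 1) ∧
                  β ≤ (1 / (d : ℝ)) * ∑ i, binEnt (z i)} ⊆
                convexHull ℝ (bv '' Set.range ω)}.ncard : ℝ) /
          (Fintype.card (Fin (nt d) → Fin d → Bool) : ℝ)))
      atTop (nhds 1) := by
  set e := ε * Real.log 2 / 2
  have he : 0 < e := half_pos (mul_pos hε (Real.log_pos one_lt_two))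
  have lower_bound_tendsto : Tendsto
      (fun d : ℕ => 1 - Real.exp (((d : ℝ) + 1) ^ 2 - Real.exp (e * d))) atTop (nhds 1) := by
    simpa using (tendsto_exp_sq_sub_exp he).const_sub 1
  refine tendsto_of_tendsto_of_tendsto_of_le_of_le' lower_bound_tendsto tendsto_const_nhds ?_
    (Eventually.of_forall fun d => ncard_div_card_le_one _)
  filter_upwards [eventually_exp_sum_binEntropy_sub_le he, eventually_gt_atTop 0]
    with d halfspace_large hd
  refine le_trans ?_ (one_sub_exp_le_ncard_subset_convexHull_div_card
    (t := Real.exp (β * d * Real.log 2 - e * d)) ?_)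
  · rw [Fintype.card_fin]
    gcongr
    exact exp_half_le_mul_exp_div_two_pow (hn d)
  · rintro z ⟨hz, hHz⟩ a
    refine le_trans ?_ (halfspace_large a z fun i => Set.Ioo_subset_Ico_self (hz i))
    gcongr
    exact mul_log_two_le_sum_binEntropy hd hHz
end
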